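/- Let d ≥ 1 and let A ⊂ ℝ^m be a finite set that contains the vertices of a non-degenerate d-dimensional parallelepiped, i.e., there exist v_0 ∈ ℝ^m and linearly independent vectors v_1, …, v_d ∈ ℝ^m such that v_0 + ε_1 v_1 + ⋯ + ε_d v_d ∈ A for every (ε_1, …, ε_d) ∈ {0,1}^d. Then |A+A| ≥ C_d·(|A| − 2^d) + 3^d, where A+A = {a + a' : a, a' ∈ A}. -/

import Mathlib

/-! The proof replaces `A` by a lower set and then compares `A` and `A + A` block by block.

*Compression.*  A linear map `φ` sends `v i` to the `i`-th unit vector.  Replace every fibre of `A`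
over the coordinates other than `i` by an initial segment of `ℕ` of the same size.  As
`|S + S'| ≥ |S| + |S'| - 1` in a torsion-free group, this does not increase `|A + A|`
(`card_compress_add_le`).  Doing so for all coordinates gives a lower set in `ℕ ^ d` of the same
size that contains the unit cube.

*Blocks.*  For a lower set, sort the points of `A` by the set `T` of coordinates that are at least
`2`, and the points of `A + A` by the set `T` of coordinates that are at least `3`.  The blocks of
`T = ∅` contribute at most `2 ^ d` and exactly `3 ^ d` points, so it suffices to compare the blocks
of each nonempty `T`, with factor `Cconst d` (`block_ge`).  Put `t = |T|`, `N = Tᶜ`, `n = |N|`.  For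
`W ⊆ N` let `X W` be the number of points of `A` in the block that are `1` on `W` and `0` on
`N \ W`; for `Z ⊆ W` let `F Z W` be the number of points of `A + A` in the block that are `2` on `Z`,
`1` on `W \ Z` and `0` on `N \ W`.

*Brunn–Minkowski.*  Points of types `P` and `Q` sum to points of type `(P ∩ Q, P ∪ Q)`.  On `T` one
gains a summand `{0, 1} ^ t`, because `A` is a lower set and the thresholds are `2 + 2` and `3`.  So
the sums have the volume of the Minkowski sum of two unions of unit cubes, and Brunn–Minkowski
(`brunn_minkowski`, `card_csum_ge`) gives
`X P + X Q + (2 ^ t - 2) * min (X P) (X Q) ≤ F (P ∩ Q) (P ∪ Q)`.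

*Choice of pairs.*  It remains to deduce `Cconst d * ∑ X W ≤ ∑ F Z W` (`total_ge`).  The pairing
`P = Z`, `Q = W` gives `∑ F Z W ≥ ∑ (2 ^ (n - j) + (2 ^ t - 1) * 2 ^ j) * a j`, where `a j` is the sum
of `X` over the `j`-element sets (`total_ge_base`).  Since `X` is decreasing,
`(j + 1) * a (j + 1) ≤ (n - j) * a j` (`layer_step`), and the few coefficients smaller than `Cconst d`
are compensated by earlier ones (`num_small`, `num_even`, `num_odd`).  Averaging over all `P`, `Q` with
given intersection and union gives the factor `2 * (3 / 2) ^ n` (`total_ge_random`), which settles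
`t = 1`, and `t = 2` with `n ≥ 12`.  For `n = t + 1` one replaces the pair `(∅, {i, k})` by `({i}, {k})`
for the two heaviest singletons (`total_ge_special`), and four further pairs `(t, n)` need a convex
combination with the pairing of `Z ∪ {i}` and `Z ∪ {j}` (`total_ge_mix`).
-/

open Pointwise

/-- The constant `C_d` from the paper: `2 (3/2)^(d-1)` for `d ≤ 5`,
`2^(d/2+1) - 1` for even `d ≥ 6`, and `3 · 2^((d-1)/2) - 3/2` for odd `d ≥ 7`. -/
noncomputable def Cconst (d : ℕ) : ℝ :=
  if d ≤ 5 then 2 * (3 / 2) ^ (d - 1)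
  else if d % 2 = 0 then 2 ^ (d / 2 + 1) - 1
  else 3 * 2 ^ ((d - 1) / 2) - 3 / 2

/-! ### Compression to a lower set -/

/-- Compression of `A` along the coordinate `i` of the map `φ`: the points of `A` whose images
under `φ` agree off the coordinate `i` are replaced by the points with the same other coordinates
and with `i`-th coordinate `0, 1, …, s - 1`, where `s` is the number of these points.  Two points
`x`, `y` agree off `i` when `Function.update x i 0 = Function.update y i 0`. -/
noncomputable def compress {V : Type*} {d : ℕ} (φ : V → Fin d → ℝ) (i : Fin d) (A : Finset V) :
    Finset (Fin d → ℝ) :=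
  A.biUnion fun a =>
    (Finset.range (A.filter fun b => Function.update (φ b) i 0 = Function.update (φ a) i 0).card).image
      fun j : ℕ => Function.update (φ a) i (j : ℝ)

/-- A point is determined by its coordinates off `i` together with its `i`-th coordinate. -/
theorem eq_update_of_key {d : ℕ} {i : Fin d} {x y : Fin d → ℝ} {r : ℝ}
    (h : Function.update y i 0 = Function.update x i 0) (hr : x i = r) :
    Function.update y i r = x := by
  have := congrArg (fun z => Function.update z i r) h
  simp only [Function.update_idem] at this
  rw [this, ← hr, Function.update_eq_self]

/-- Membership in a compression: the `i`-th coordinate of `x` is a natural number smaller than the size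
of the fibre of `A` over the remaining coordinates of `x`. -/
theorem mem_compress {V : Type*} {d : ℕ} (φ : V → Fin d → ℝ) (i : Fin d) (A : Finset V)
    (x : Fin d → ℝ) : x ∈ compress φ i A ↔ ∃ n : ℕ, x i = n ∧
      n < (A.filter fun b => Function.update (φ b) i 0 = Function.update x i 0).card := by
  simp only [compress, Finset.mem_biUnion, Finset.mem_image, Finset.mem_range]
  constructor
  · rintro ⟨a, _, n, hn, rfl⟩
    exact ⟨n, by simp, by simpa using hn⟩
  · rintro ⟨n, hn, hlt⟩
    obtain ⟨a, ha⟩ := Finset.card_pos.1 (Nat.zero_lt_of_lt hlt)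
    obtain ⟨haA, hax⟩ := Finset.mem_filter.1 ha
    exact ⟨a, haA, n, by rwa [hax], eq_update_of_key hax hn⟩

theorem update_natCast_injective {d : ℕ} (x : Fin d → ℝ) (i : Fin d) :
    Function.Injective fun n : ℕ => Function.update x i (n : ℝ) := by
  intro a b h
  have := congrFun h i
  simpa using this

theorem card_compress {V : Type*} {d : ℕ} (φ : V → Fin d → ℝ) (i : Fin d) (A : Finset V) :
    (compress φ i A).card = A.card := by
  rw [Finset.card_eq_sum_card_fiberwise (s := A) (f := fun a => Function.update (φ a) i 0)
      (t := A.image fun a => Function.update (φ a) i 0)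
      (fun a ha => Finset.mem_coe.2 (Finset.mem_image_of_mem _ ha)),
    Finset.card_eq_sum_card_fiberwise (s := compress φ i A) (f := fun x => Function.update x i 0)
      (t := A.image fun a => Function.update (φ a) i 0)]
  · refine Finset.sum_congr rfl fun k hk => ?_
    obtain ⟨a, ha, rfl⟩ := Finset.mem_image.1 hk
    have : ((compress φ i A).filter fun x => Function.update x i 0 = Function.update (φ a) i 0)
        = (Finset.range (A.filter fun b => Function.update (φ b) i 0
            = Function.update (φ a) i 0).card).image fun n : ℕ => Function.update (φ a) i (n : ℝ) := by
      ext x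
      rw [Finset.mem_filter, mem_compress, Finset.mem_image]
      constructor
      · rintro ⟨⟨n, hn, hlt⟩, hx⟩
        exact ⟨n, Finset.mem_range.2 (by rwa [hx] at hlt), eq_update_of_key hx.symm hn⟩
      · rintro ⟨n, hn, rfl⟩
        exact ⟨⟨n, by simp, by simpa using hn⟩, by simp⟩
    rw [this, Finset.card_image_of_injective _ (update_natCast_injective _ _), Finset.card_range]
  · intro x hx
    obtain ⟨n, -, hlt⟩ := (mem_compress _ _ _ _).1 (Finset.mem_coe.1 hx)
    obtain ⟨a, ha⟩ := Finset.card_pos.1 (Nat.zero_lt_of_lt hlt)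
    obtain ⟨haA, hax⟩ := Finset.mem_filter.1 ha
    exact Finset.mem_coe.2 (Finset.mem_image.2 ⟨a, haA, hax⟩)

theorem update_add_zero {d : ℕ} (x y : Fin d → ℝ) (i : Fin d) :
    Function.update (x + y) i 0 = Function.update x i 0 + Function.update y i 0 := by
  funext j
  by_cases h : j = i
  · subst h; simp
  · simp [h]

/-- Compression along an additive map does not increase the sumset.  If `b₁`, `b₂` lie over fibres of
sizes `s₁`, `s₂`, then the `i`-th coordinate of `b₁ + b₂` is at most `s₁ + s₂ - 2`, while the sum of
the two fibres has at least `s₁ + s₂ - 1` elements, because the group is torsion-free, and lies over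
the remaining coordinates of `b₁ + b₂`. -/
theorem card_compress_add_le {V : Type*} [AddCommGroup V] [IsAddTorsionFree V] [DecidableEq V]
    {d : ℕ} (φ : V →+ (Fin d → ℝ)) (i : Fin d) (A : Finset V) :
    (compress φ i A + compress φ i A).card ≤ (A + A).card := by
  set B := compress φ i A
  rw [Finset.card_eq_sum_card_fiberwise (s := B + B) (f := fun x => Function.update x i 0)
      (t := (B + B).image fun x => Function.update x i 0)
      (fun a ha => Finset.mem_coe.2 (Finset.mem_image_of_mem _ ha))]
  calc _ ≤ ∑ k ∈ (B + B).image fun x => Function.update x i 0,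
        ((A + A).filter fun c => Function.update (φ c) i 0 = k).card := by
        refine Finset.sum_le_sum fun k _ => ?_
        have hsub : ((B + B).filter fun x => Function.update x i 0 = k) ⊆
            (Finset.range ((A + A).filter fun c => Function.update (φ c) i 0 = k).card).image
              fun n : ℕ => Function.update k i (n : ℝ) := by
          intro x hx
          obtain ⟨hxB, rfl⟩ := Finset.mem_filter.1 hx
          obtain ⟨b₁, hb₁, b₂, hb₂, rfl⟩ := Finset.mem_add.1 hxB
          obtain ⟨n₁, hn₁, hlt₁⟩ := (mem_compress _ _ _ _).1 hb₁
          obtain ⟨n₂, hn₂, hlt₂⟩ := (mem_compress _ _ _ _).1 hb₂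
          set A₁ := A.filter fun b => Function.update (φ b) i 0 = Function.update b₁ i 0
          set A₂ := A.filter fun b => Function.update (φ b) i 0 = Function.update b₂ i 0
          have hcd := cauchy_davenport_of_isAddTorsionFree (s := A₁) (t := A₂)
            (Finset.card_pos.1 (by omega)) (Finset.card_pos.1 (by omega))
          have hle : (A₁ + A₂).card ≤ ((A + A).filter fun c =>
              Function.update (φ c) i 0 = Function.update (b₁ + b₂) i 0).card := by
            refine Finset.card_le_card fun c hc => ?_
            obtain ⟨a₁, ha₁, a₂, ha₂, rfl⟩ := Finset.mem_add.1 hc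
            obtain ⟨ha₁, h₁⟩ := Finset.mem_filter.1 ha₁
            obtain ⟨ha₂, h₂⟩ := Finset.mem_filter.1 ha₂
            refine Finset.mem_filter.2 ⟨Finset.add_mem_add ha₁ ha₂, ?_⟩
            rw [map_add, update_add_zero, update_add_zero, h₁, h₂]
          refine Finset.mem_image.2 ⟨n₁ + n₂, Finset.mem_range.2 (by omega), ?_⟩
          exact eq_update_of_key (by simp) (by simp [hn₁, hn₂])
        exact (Finset.card_le_card hsub).trans
          (Finset.card_image_le.trans (Finset.card_range _).le)
    _ ≤ (A + A).card := by
        rw [Finset.sum_card_fiberwise_eq_card_filter]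
        exact Finset.card_filter_le _ _

/-- Every point of `B` has a natural number as its `j`-th coordinate, and that coordinate can be
replaced by any smaller natural number. -/
def NatDown {d : ℕ} (j : Fin d) (B : Finset (Fin d → ℝ)) : Prop :=
  ∀ x ∈ B, ∃ n : ℕ, x j = n ∧ ∀ m : ℕ, m ≤ n → Function.update x j (m : ℝ) ∈ B

theorem natDown_compress {V : Type*} {d : ℕ} (φ : V → Fin d → ℝ) (i : Fin d) (A : Finset V) :
    NatDown i (compress φ i A) := by
  intro x hx
  obtain ⟨n, hn, hlt⟩ := (mem_compress _ _ _ _).1 hx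
  exact ⟨n, hn, fun m hm => (mem_compress _ _ _ _).2
    ⟨m, by simp, by rw [Function.update_idem]; omega⟩⟩

/-- Compression along `i` preserves the downward closedness along another coordinate `j`, because
lowering `j` maps one fibre injectively into another. -/
theorem natDown_compress_of_ne {d : ℕ} {i j : Fin d} (hij : j ≠ i) (A : Finset (Fin d → ℝ))
    (hA : NatDown j A) : NatDown j (compress id i A) := by
  intro x hx
  obtain ⟨n, hn, hlt⟩ := (mem_compress _ _ _ _).1 hx
  have hcoord : ∀ b : Fin d → ℝ, Function.update b i 0 = Function.update x i 0 → b j = x j := by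
    intro b hb
    simpa [hij] using congrFun hb j
  obtain ⟨a, ha⟩ := Finset.card_pos.1 (Nat.zero_lt_of_lt hlt)
  obtain ⟨haA, hax⟩ := Finset.mem_filter.1 ha
  obtain ⟨p, hp, -⟩ := hA a haA
  have hxp : x j = p := (hcoord a hax).symm.trans hp
  refine ⟨p, hxp, fun m hm => (mem_compress _ _ _ _).2
    ⟨n, by rw [Function.update_of_ne hij.symm, hn], hlt.trans_le ?_⟩⟩
  refine Finset.card_le_card_of_injOn (fun b => Function.update b j (m : ℝ)) ?_ ?_
  · intro b hb
    obtain ⟨hbA, hbx⟩ := Finset.mem_filter.1 (Finset.mem_coe.1 hb)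
    obtain ⟨q, hq, hdown⟩ := hA b hbA
    have hqp : q = p := by
      have : (q : ℝ) = p := by rw [← hq, hcoord b hbx, hxp]
      exact_mod_cast this
    refine Finset.mem_coe.2 (Finset.mem_filter.2 ⟨hdown m (hqp ▸ hm), ?_⟩)
    simp only [id] at hbx ⊢
    rw [Function.update_comm hij, hbx, Function.update_comm hij]
  · intro b hb c hc hbc
    obtain ⟨-, hbx⟩ := Finset.mem_filter.1 (Finset.mem_coe.1 hb)
    obtain ⟨-, hcx⟩ := Finset.mem_filter.1 (Finset.mem_coe.1 hc)
    have hi : b i = c i := by simpa [hij.symm] using congrFun hbc i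
    exact (eq_update_of_key (hbx.trans hcx.symm).symm hi).symm.trans (Function.update_eq_self i c)

/-- The vertices of the unit cube survive compression, since the fibre over a vertex contains preimages
of both endpoints of the edge in direction `i`. -/
theorem cube_compress {V : Type*} {d : ℕ} (φ : V → Fin d → ℝ) (i : Fin d) (A : Finset V)
    (hA : ∀ ε : Fin d → ℝ, (∀ j, ε j = 0 ∨ ε j = 1) → ∃ a ∈ A, φ a = ε) :
    ∀ ε : Fin d → ℝ, (∀ j, ε j = 0 ∨ ε j = 1) → ε ∈ compress φ i A := by
  intro ε hε
  obtain ⟨a, ha, hφ⟩ := hA ε hε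
  have haf : a ∈ A.filter fun b => Function.update (φ b) i 0 = Function.update ε i 0 :=
    Finset.mem_filter.2 ⟨ha, by rw [hφ]⟩
  rcases hε i with h | h
  · exact (mem_compress _ _ _ _).2 ⟨0, by simpa using h, Finset.card_pos.2 ⟨a, haf⟩⟩
  · obtain ⟨a', ha', hφ'⟩ := hA (Function.update ε i 0) fun j => by
      by_cases hj : j = i
      · subst hj; simp
      · simpa [hj] using hε j
    refine (mem_compress _ _ _ _).2 ⟨1, by simpa using h, Finset.one_lt_card.2
      ⟨a, haf, a', Finset.mem_filter.2 ⟨ha', by rw [hφ', Function.update_idem]⟩, ?_⟩⟩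
    rintro rfl
    have := congrFun (hφ.symm.trans hφ') i
    simp [h] at this

/-- Compressing successively along all coordinates in `s`. -/
theorem exists_natDown {d : ℕ} (s : Finset (Fin d)) (A : Finset (Fin d → ℝ))
    (hA : ∀ ε : Fin d → ℝ, (∀ j, ε j = 0 ∨ ε j = 1) → ε ∈ A) :
    ∃ B : Finset (Fin d → ℝ), B.card = A.card ∧ (B + B).card ≤ (A + A).card ∧
      (∀ ε : Fin d → ℝ, (∀ j, ε j = 0 ∨ ε j = 1) → ε ∈ B) ∧ ∀ i ∈ s, NatDown i B := by
  induction s using Finset.induction_on with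
  | empty => exact ⟨A, rfl, le_rfl, hA, by simp⟩
  | insert i s hi ih =>
    obtain ⟨B, h1, h2, h3, h4⟩ := ih
    refine ⟨compress id i B, (card_compress _ _ _).trans h1,
      (card_compress_add_le (AddMonoidHom.id _) i B).trans h2,
      cube_compress _ _ _ fun ε hε => ⟨ε, h3 ε hε, rfl⟩, fun j hj => ?_⟩
    rcases eq_or_ne j i with rfl | hne
    · exact natDown_compress _ _ _
    · exact natDown_compress_of_ne hne _ (h4 j ((Finset.mem_insert.1 hj).resolve_left hne))

/-- A set that is downward closed in every coordinate comes from a lower set in `ℕ ^ d`. -/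
theorem exists_lower_set {d : ℕ} (B : Finset (Fin d → ℝ))
    (hcube : ∀ ε : Fin d → ℝ, (∀ j, ε j = 0 ∨ ε j = 1) → ε ∈ B) (hB : ∀ i, NatDown i B) :
    ∃ A : Finset (Fin d → ℕ), IsLowerSet (A : Set (Fin d → ℕ)) ∧
      (∀ x : Fin d → ℕ, (∀ i, x i ≤ 1) → x ∈ A) ∧ A.card = B.card ∧
      (A + A).card ≤ (B + B).card := by
  let c : (Fin d → ℕ) → Fin d → ℝ := fun x i => x i
  have hc : Function.Injective c := fun x y h => funext fun i => by
    exact Nat.cast_injective (R := ℝ) (congrFun h i)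
  have hmem : ∀ x, x ∈ B.preimage c hc.injOn ↔ c x ∈ B := fun x => Finset.mem_preimage
  refine ⟨B.preimage c hc.injOn, ?_, ?_, ?_, ?_⟩
  · intro x y hyx hx
    rw [Finset.mem_coe, hmem] at hx ⊢
    -- the coordinates of `x` are lowered to those of `y` one at a time
    have key : ∀ s : Finset (Fin d), c (s.piecewise y x) ∈ B := by
      intro s
      induction s using Finset.induction_on with
      | empty => simpa using hx
      | insert j s hj ih =>
        obtain ⟨n, hn, hdown⟩ := hB j _ ih
        have hxn : x j = n := by
          have : ((x j : ℕ) : ℝ) = n := by simpa [c, hj] using hn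
          exact_mod_cast this
        have := hdown (y j) (hxn ▸ hyx j)
        convert this using 1
        rw [Finset.piecewise_insert]
        funext k
        by_cases hk : k = j
        · subst hk; simp [c]
        · simp [c, hk]
    simpa using key Finset.univ
  · intro x hx
    rw [hmem]
    refine hcube _ fun i => ?_
    have := hx i
    have : x i = 0 ∨ x i = 1 := by omega
    rcases this with h | h <;> simp [c, h]
  · rw [← Finset.card_image_of_injective _ hc]
    congr 1
    ext x
    rw [Finset.mem_image]
    constructor
    · rintro ⟨y, hy, rfl⟩
      exact (hmem y).1 hy
    · intro hx
      choose n hn _ using fun i => hB i x hx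
      have e : c n = x := funext fun i => (hn i).symm
      exact ⟨n, (hmem n).2 (e ▸ hx), e⟩
  · rw [← Finset.card_image_of_injective _ hc]
    refine Finset.card_le_card fun z hz => ?_
    obtain ⟨w, hw, rfl⟩ := Finset.mem_image.1 hz
    obtain ⟨x, hx, y, hy, rfl⟩ := Finset.mem_add.1 hw
    refine Finset.mem_add.2 ⟨c x, (hmem x).1 hx, c y, (hmem y).1 hy, ?_⟩
    funext i
    simp [c]

/-! ### Brunn–Minkowski for unions of unit cubes -/

/-- A positive `s`-th root, where for `s = 0` only the value `1` has one. -/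
theorem exists_root (s : ℕ) (u : ℝ) (hu : 0 < u) (h : s = 0 → u = 1) : ∃ a : ℝ, 0 < a ∧ a ^ s = u := by
  rcases Nat.eq_zero_or_pos s with rfl | hs
  · exact ⟨1, one_pos, by rw [h rfl, pow_zero]⟩
  · exact ⟨u ^ ((s : ℝ)⁻¹), Real.rpow_pos_of_pos hu _, Real.rpow_inv_natCast_pow hu.le hs.ne'⟩

/-- One-dimensional sumset inequality for decreasing profiles with the same maximum, read as integer
step functions. -/
theorem sum_add_sum_le (f g h : ℕ → ℝ) (hf : Antitone f) (hg : Antitone g) (h0 : f 0 = g 0)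
    (h1 : ∀ i j, min (f i) (g j) ≤ h (i + j)) (h2 : ∀ i j, min (f i) (g j) ≤ h (i + j + 1)) :
    ∀ n p q, p + q = n →
      ∑ i ∈ Finset.range (p + 1), f i + ∑ j ∈ Finset.range (q + 1), g j
        ≤ ∑ k ∈ Finset.range (p + q + 2), h k := by
  intro n
  induction n with
  | zero =>
    intro p q hpq
    obtain ⟨rfl, rfl⟩ : p = 0 ∧ q = 0 := by omega
    have e1 := h1 0 0
    have e2 := h2 0 0
    rw [h0, min_self] at e1 e2
    simp [Finset.sum_range_succ] at e1 e2 ⊢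
    linarith
  | succ n ih =>
    intro p q hpq
    -- drop the smaller of the two last terms
    have hcase : (1 ≤ p ∧ f p ≤ g q) ∨ (1 ≤ q ∧ g q ≤ f p) := by
      rcases Nat.eq_zero_or_pos p with rfl | hp
      · exact Or.inr ⟨by omega, h0 ▸ hg (Nat.zero_le _)⟩
      rcases Nat.eq_zero_or_pos q with rfl | hq
      · exact Or.inl ⟨hp, h0 ▸ hf (Nat.zero_le _)⟩
      rcases le_total (f p) (g q) with h | h
      · exact Or.inl ⟨hp, h⟩
      · exact Or.inr ⟨hq, h⟩
    have e2 := h2 p q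
    rw [Finset.sum_range_succ h]
    rcases hcase with ⟨hp, hle⟩ | ⟨hq, hle⟩
    · rw [min_eq_left hle] at e2
      obtain ⟨r, rfl⟩ : ∃ r, p = r + 1 := ⟨p - 1, by omega⟩
      have := ih r q (by omega)
      rw [Finset.sum_range_succ f (r + 1), show r + 1 + q + 1 = r + q + 2 by ring] at *
      linarith
    · rw [min_eq_right hle] at e2
      obtain ⟨r, rfl⟩ : ∃ r, q = r + 1 := ⟨q - 1, by omega⟩
      have := ih p r (by omega)
      rw [Finset.sum_range_succ g (r + 1), show p + (r + 1) + 1 = p + r + 2 by ring] at *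
      linarith

/-- The slice of `U` at height `i` along the first coordinate. -/
def slice {s : ℕ} (U : Finset (Fin (s + 1) → ℕ)) (i : ℕ) : Finset (Fin s → ℕ) :=
  (U.filter fun x => x 0 = i).image Fin.tail

theorem mem_slice {s : ℕ} (U : Finset (Fin (s + 1) → ℕ)) (i : ℕ) (y : Fin s → ℕ) :
    y ∈ slice U i ↔ (Fin.cons i y : Fin (s + 1) → ℕ) ∈ U := by
  simp only [slice, Finset.mem_image, Finset.mem_filter]
  constructor
  · rintro ⟨x, ⟨hx, rfl⟩, rfl⟩
    rwa [Fin.cons_self_tail]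
  · intro h
    exact ⟨_, ⟨h, Fin.cons_zero _ _⟩, Fin.tail_cons _ _⟩

theorem card_slice {s : ℕ} (U : Finset (Fin (s + 1) → ℕ)) (i : ℕ) :
    (slice U i).card = (U.filter fun x => x 0 = i).card := by
  refine Finset.card_image_of_injOn fun x hx y hy hxy => ?_
  have hx' : x 0 = i := (Finset.mem_filter.1 hx).2
  have hy' : y 0 = i := (Finset.mem_filter.1 hy).2
  rw [← Fin.cons_self_tail x, ← Fin.cons_self_tail y, hx', hy', hxy]

theorem sum_card_slice_le {s : ℕ} (U : Finset (Fin (s + 1) → ℕ)) (R : ℕ) :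
    ∑ i ∈ Finset.range R, (slice U i).card ≤ U.card := by
  simp_rw [card_slice]
  rw [Finset.sum_card_fiberwise_eq_card_filter]
  exact Finset.card_filter_le _ _

theorem sum_card_slice_eq {s : ℕ} (U : Finset (Fin (s + 1) → ℕ)) (R : ℕ) (h : ∀ x ∈ U, x 0 < R) :
    ∑ i ∈ Finset.range R, (slice U i).card = U.card := by
  simp_rw [card_slice]
  rw [Finset.sum_card_fiberwise_eq_card_filter]
  rw [Finset.filter_true_of_mem]
  exact fun x hx => Finset.mem_range.2 (h x hx)

theorem slice_lower {s : ℕ} (U : Finset (Fin (s + 1) → ℕ)) (hU : IsLowerSet (U : Set (Fin (s + 1) → ℕ)))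
    (i : ℕ) : IsLowerSet (slice U i : Set (Fin s → ℕ)) := by
  intro y z hzy hy
  rw [Finset.mem_coe, mem_slice] at *
  exact hU (Fin.cons_le_cons.2 ⟨le_rfl, hzy⟩) hy

theorem slice_anti {s : ℕ} (U : Finset (Fin (s + 1) → ℕ)) (hU : IsLowerSet (U : Set (Fin (s + 1) → ℕ)))
    {i j : ℕ} (hij : i ≤ j) : slice U j ⊆ slice U i := by
  intro y hy
  rw [mem_slice] at *
  exact hU (Fin.cons_le_cons.2 ⟨hij, le_rfl⟩) hy

/-- The sumset of the unions of unit cubes with lower corners in `U` and `V`, as a set of lower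
corners of unit cubes. -/
def csum {t : ℕ} (U V : Finset (Fin t → ℕ)) : Finset (Fin t → ℕ) :=
  U + V + Fintype.piFinset fun _ => Finset.range 2

theorem mem_csum {t : ℕ} (U V : Finset (Fin t → ℕ)) (c : Fin t → ℕ) :
    c ∈ csum U V ↔ ∃ u ∈ U, ∃ v ∈ V, ∃ e : Fin t → ℕ, (∀ i, e i ≤ 1) ∧ u + v + e = c := by
  simp only [csum, Finset.mem_add, Fintype.mem_piFinset, Finset.mem_range, Nat.lt_succ_iff]
  constructor
  · rintro ⟨w, ⟨u, hu, v, hv, rfl⟩, e, he, rfl⟩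
    exact ⟨u, hu, v, hv, e, he, rfl⟩
  · rintro ⟨u, hu, v, hv, e, he, rfl⟩
    exact ⟨_, ⟨u, hu, v, hv, rfl⟩, e, he, rfl⟩

theorem csum_slice {s : ℕ} (U V : Finset (Fin (s + 1) → ℕ)) (i j e0 : ℕ) (he0 : e0 ≤ 1) :
    csum (slice U i) (slice V j) ⊆ slice (csum U V) (i + j + e0) := by
  intro c hc
  rw [mem_csum] at hc
  obtain ⟨u, hu, v, hv, e, he, rfl⟩ := hc
  rw [mem_slice] at hu hv ⊢
  rw [mem_csum]
  refine ⟨_, hu, _, hv, Fin.cons e0 e, ?_, ?_⟩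
  · intro k; refine Fin.cases ?_ (fun k => ?_) k
    · simpa using he0
    · simpa using he k
  · funext k; refine Fin.cases ?_ (fun k => ?_) k <;> simp

/-- Convexity of `z ↦ z ^ (s + 1)` at the points `x / a` and `y / b` with weights proportional to
`a` and `b`. -/
theorem jensen_pow (s : ℕ) (a b x y : ℝ) (ha : 0 < a) (hb : 0 < b) (hx : 0 ≤ x) (hy : 0 ≤ y) :
    (x + y) ^ (s + 1) ≤ (a + b) ^ s * (x ^ (s + 1) / a ^ s + y ^ (s + 1) / b ^ s) := by
  have hab : 0 < a + b := by positivity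
  have h := (convexOn_pow (𝕜 := ℝ) (s + 1)).2
    (Set.mem_Ici.2 (show 0 ≤ x / a by positivity)) (Set.mem_Ici.2 (show 0 ≤ y / b by positivity))
    (show 0 ≤ a / (a + b) by positivity) (show 0 ≤ b / (a + b) by positivity) (by field_simp)
  simp only [smul_eq_mul] at h
  have e1 : a / (a + b) * (x / a) + b / (a + b) * (y / b) = (x + y) / (a + b) := by
    field_simp
  rw [e1, div_pow, div_le_iff₀ (by positivity)] at h
  refine h.trans (le_of_eq ?_)
  rw [div_pow, div_pow]
  field_simp
  ring

/-- The Brunn–Minkowski inequality for unions of unit cubes over finite lower sets.  The roots of the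
volumes are replaced by arbitrary `x`, `y` with `x ^ t ≤ |U|` and `y ^ t ≤ |V|`, which keeps
the case `t = 0` meaningful. -/
theorem brunn_minkowski : ∀ (t : ℕ) (U V : Finset (Fin t → ℕ)),
    IsLowerSet (U : Set (Fin t → ℕ)) → IsLowerSet (V : Set (Fin t → ℕ)) →
    U.Nonempty → V.Nonempty → ∀ x y : ℝ, 0 ≤ x → 0 ≤ y →
    x ^ t ≤ U.card → y ^ t ≤ V.card → (x + y) ^ t ≤ (csum U V).card := by
  intro t
  induction t with
  | zero =>
    rintro U V - - ⟨u, hu⟩ ⟨v, hv⟩ x y - - - -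
    rw [pow_zero]
    have : (csum U V).Nonempty := ⟨u + v + 0, (mem_csum _ _ _).2 ⟨u, hu, v, hv, 0, by simp, rfl⟩⟩
    exact_mod_cast Finset.card_pos.2 this
  | succ s ih =>
    intro U V hU hV hUn hVn x y hx hy hxU hyV
    have h0 : ∀ W : Finset (Fin (s + 1) → ℕ), IsLowerSet (W : Set (Fin (s + 1) → ℕ)) → W.Nonempty →
        (slice W 0).Nonempty := by
      rintro W hW ⟨w, hw⟩
      refine ⟨Fin.tail w, (mem_slice _ _ _).2 (hW ?_ hw)⟩
      rw [← Fin.cons_self_tail w]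
      exact Fin.cons_le_cons.2 ⟨Nat.zero_le _, by simp⟩
    -- in dimension zero a nonempty set has exactly one point
    have hone : ∀ W : Finset (Fin s → ℕ), W.Nonempty → s = 0 → (W.card : ℝ) = 1 := by
      rintro W hW rfl
      have h1 := Finset.card_pos.2 hW
      have h2 : W.card ≤ 1 := Finset.card_le_one.2 fun a _ b _ => Subsingleton.elim a b
      have : W.card = 1 := by omega
      exact_mod_cast this
    have hu0 : (0 : ℝ) < (slice U 0).card := by exact_mod_cast Finset.card_pos.2 (h0 U hU hUn)
    have hv0 : (0 : ℝ) < (slice V 0).card := by exact_mod_cast Finset.card_pos.2 (h0 V hV hVn)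
    obtain ⟨a, ha, hau⟩ := exists_root s _ hu0 (hone _ (h0 U hU hUn))
    obtain ⟨b, hb, hbv⟩ := exists_root s _ hv0 (hone _ (h0 V hV hVn))
    have hK : 0 < (a + b) ^ s := by positivity
    -- slice volumes, rescaled so that both profiles have maximum `(a + b) ^ s`
    let f : ℕ → ℝ := fun i => (a + b) ^ s * ((slice U i).card / a ^ s)
    let g : ℕ → ℝ := fun i => (a + b) ^ s * ((slice V i).card / b ^ s)
    have hmin : ∀ i j e0, e0 ≤ 1 → min (f i) (g j) ≤ ((slice (csum U V) (i + j + e0)).card : ℝ) := by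
      intro i j e0 he0
      rcases (slice U i).eq_empty_or_nonempty with hUi | hUi
      · refine (min_le_left _ _).trans ?_
        simp [f, hUi]
      rcases (slice V j).eq_empty_or_nonempty with hVj | hVj
      · refine (min_le_right _ _).trans ?_
        simp [g, hVj]
      have hUi' : (0 : ℝ) < (slice U i).card := by exact_mod_cast Finset.card_pos.2 hUi
      have hVj' : (0 : ℝ) < (slice V j).card := by exact_mod_cast Finset.card_pos.2 hVj
      -- the two slices have volumes at least `μ * a ^ s` and `μ * b ^ s`
      set μ : ℝ := min ((slice U i).card / a ^ s) ((slice V j).card / b ^ s) with hμ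
      have hμ0 : 0 < μ := lt_min (by positivity) (by positivity)
      obtain ⟨r, hr, hrμ⟩ := exists_root s μ hμ0 (by
        rintro rfl
        rw [hμ, hone _ hUi rfl, hone _ hVj rfl]; simp)
      have := ih _ _ (slice_lower U hU i) (slice_lower V hV j) hUi hVj (a * r) (b * r)
        (by positivity) (by positivity)
        (by rw [mul_pow, hrμ, ← le_div_iff₀' (by positivity)]; exact min_le_left _ _)
        (by rw [mul_pow, hrμ, ← le_div_iff₀' (by positivity)]; exact min_le_right _ _)
      rw [← add_mul, mul_pow, hrμ] at this
      calc min (f i) (g j) = (a + b) ^ s * μ := (mul_min_of_nonneg _ _ hK.le).symm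
        _ ≤ _ := this
        _ ≤ _ := by exact_mod_cast Finset.card_le_card (csum_slice U V i j e0 he0)
    have anti : ∀ (W : Finset (Fin (s + 1) → ℕ)) (c : ℝ), 0 < c →
        IsLowerSet (W : Set (Fin (s + 1) → ℕ)) →
        Antitone fun i => (a + b) ^ s * (((slice W i).card : ℝ) / c) := by
      intro W c hc hW i j hij
      have : ((slice W j).card : ℝ) ≤ (slice W i).card := by
        exact_mod_cast Finset.card_le_card (slice_anti W hW hij)
      dsimp only
      gcongr
    have hsum : ∀ W : Finset (Fin (s + 1) → ℕ), ∃ R, ∑ i ∈ Finset.range (R + 1), (slice W i).card = W.card :=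
      fun W => ⟨W.sup fun x => x 0, sum_card_slice_eq W _ fun x hx =>
        Nat.lt_succ_of_le (Finset.le_sup (f := fun x : Fin (s + 1) → ℕ => x 0) hx)⟩
    obtain ⟨p, hp⟩ := hsum U
    obtain ⟨q, hq⟩ := hsum V
    have key := sum_add_sum_le f g (fun k => ((slice (csum U V) k).card : ℝ))
      (anti U _ (by positivity) hU) (anti V _ (by positivity) hV)
      (by simp only [f, g, ← hau, ← hbv]; rw [div_self (by positivity), div_self (by positivity)])
      (fun i j => hmin i j 0 (by norm_num)) (fun i j => hmin i j 1 le_rfl) _ p q rfl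
    have hle : (∑ k ∈ Finset.range (p + q + 2), ((slice (csum U V) k).card : ℝ)) ≤ (csum U V).card := by
      exact_mod_cast sum_card_slice_le (csum U V) (p + q + 2)
    have ef : ∑ i ∈ Finset.range (p + 1), f i = (a + b) ^ s * (U.card / a ^ s) := by
      simp only [f, ← Finset.mul_sum, ← Finset.sum_div]
      rw [← hp]; push_cast; rfl
    have eg : ∑ i ∈ Finset.range (q + 1), g i = (a + b) ^ s * (V.card / b ^ s) := by
      simp only [g, ← Finset.mul_sum, ← Finset.sum_div]
      rw [← hq]; push_cast; rfl
    rw [ef, eg, ← mul_add] at key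
    calc (x + y) ^ (s + 1) ≤ (a + b) ^ s * (x ^ (s + 1) / a ^ s + y ^ (s + 1) / b ^ s) :=
          jensen_pow s a b x y ha hb hx hy
      _ ≤ (a + b) ^ s * (U.card / a ^ s + V.card / b ^ s) := by gcongr
      _ ≤ _ := key.trans hle

theorem add_pow_ge (t : ℕ) (ht : 1 ≤ t) (x y : ℝ) (hy : 0 ≤ y) (hxy : y ≤ x) :
    x ^ t + (2 ^ t - 1) * y ^ t ≤ (x + y) ^ t := by
  induction t, ht using Nat.le_induction with
  | base => norm_num
  | succ t ht ih =>
    have hx := hy.trans hxy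
    have h1 : y ^ t ≤ x ^ t := pow_le_pow_left₀ hy hxy t
    have h2 := mul_le_mul_of_nonneg_right ih (add_nonneg hx hy)
    have h3 : (1 : ℝ) ≤ 2 ^ t := one_le_pow₀ (by norm_num)
    have h4 : 0 ≤ (2 ^ t - 1) * (y ^ t * (x - y)) :=
      mul_nonneg (by linarith) (mul_nonneg (pow_nonneg hy t) (by linarith))
    have h5 : 0 ≤ (x ^ t - y ^ t) * y := mul_nonneg (by linarith) hy
    simp only [pow_succ]
    nlinarith

/-- The consequence of Brunn–Minkowski that is linear in the cardinalities. -/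
theorem card_csum_ge (t : ℕ) (ht : 1 ≤ t) (U V : Finset (Fin t → ℕ))
    (hU : IsLowerSet (U : Set (Fin t → ℕ))) (hV : IsLowerSet (V : Set (Fin t → ℕ)))
    (hUn : U.Nonempty) (hVn : V.Nonempty) :
    (U.card : ℝ) + V.card + ((2 : ℝ) ^ t - 2) * min (U.card : ℝ) V.card ≤ (csum U V).card := by
  obtain ⟨x, hx, hxU⟩ := exists_root t U.card (by exact_mod_cast Finset.card_pos.2 hUn) (by omega)
  obtain ⟨y, hy, hyV⟩ := exists_root t V.card (by exact_mod_cast Finset.card_pos.2 hVn) (by omega)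
  have h := brunn_minkowski t U V hU hV hUn hVn x y hx.le hy.le hxU.le hyV.le
  refine le_trans ?_ h
  rw [← hxU, ← hyV]
  rcases le_total y x with hle | hle
  · rw [min_eq_right (pow_le_pow_left₀ hy.le hle t)]
    have := add_pow_ge t ht x y hy.le hle
    linarith
  · rw [min_eq_left (pow_le_pow_left₀ hx.le hle t)]
    have := add_pow_ge t ht y x hx.le hle
    rw [add_comm x y]
    linarith

/-! ### Sums over nested pairs of sets -/

theorem sum_sum_union {α : Type*} [DecidableEq α] (N : Finset α) (l k : ℕ)
    (f : Finset α → ℝ) :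
    ∑ Z ∈ N.powersetCard l, ∑ U ∈ (N \ Z).powersetCard k, f (Z ∪ U)
      = ((l + k).choose l : ℝ) * ∑ W ∈ N.powersetCard (l + k), f W := by
  have h1 : ∀ Z ∈ N.powersetCard l, ∑ U ∈ (N \ Z).powersetCard k, f (Z ∪ U)
      = ∑ W ∈ (N.powersetCard (l + k)).filter (fun W => Z ⊆ W), f W := by
    intro Z hZ
    rw [Finset.mem_powersetCard] at hZ
    refine Finset.sum_bij' (fun U _ => Z ∪ U) (fun W _ => W \ Z) ?_ ?_ ?_ ?_ ?_
    · intro U hU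
      rw [Finset.mem_powersetCard, Finset.subset_sdiff] at hU
      rw [Finset.mem_filter, Finset.mem_powersetCard]
      refine ⟨⟨Finset.union_subset hZ.1 hU.1.1, ?_⟩, Finset.subset_union_left⟩
      rw [Finset.card_union_of_disjoint hU.1.2.symm, hZ.2, hU.2]
    · intro W hW
      rw [Finset.mem_filter, Finset.mem_powersetCard] at hW
      rw [Finset.mem_powersetCard]
      refine ⟨Finset.sdiff_subset_sdiff hW.1.1 le_rfl, ?_⟩
      rw [Finset.card_sdiff_of_subset hW.2, hW.1.2, hZ.2]; omega
    · intro U hU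
      rw [Finset.mem_powersetCard, Finset.subset_sdiff] at hU
      exact Finset.union_sdiff_cancel_left hU.1.2.symm
    · intro W hW
      rw [Finset.mem_filter] at hW
      exact Finset.union_sdiff_of_subset hW.2
    · intros; rfl
  rw [Finset.sum_congr rfl h1]
  simp_rw [Finset.sum_filter]
  rw [Finset.sum_comm, Finset.mul_sum]
  refine Finset.sum_congr rfl fun W hW => ?_
  rw [Finset.mem_powersetCard] at hW
  rw [← Finset.sum_filter, Finset.sum_const, nsmul_eq_mul]
  congr 2
  rw [← hW.2, ← Finset.card_powersetCard]
  congr 1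
  ext Z
  simp only [Finset.mem_filter, Finset.mem_powersetCard]
  exact ⟨fun h => ⟨h.2, h.1.2⟩, fun h => ⟨⟨h.1.trans hW.1, h.2⟩, h.1⟩⟩

/-- The total weight of the `j`-element subsets of `N`. -/
def layer {α : Type*} (N : Finset α) (X : Finset α → ℝ) (j : ℕ) : ℝ :=
  ∑ W ∈ N.powersetCard j, X W

theorem sum_sum_insert {α : Type*} [DecidableEq α] (N : Finset α) (l : ℕ)
    (X : Finset α → ℝ) :
    ∑ Z ∈ N.powersetCard l, ∑ i ∈ N \ Z, X (insert i Z) = (l + 1) * layer N X (l + 1) := by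
  have h := sum_sum_union N l 1 X
  rw [Nat.choose_succ_self_right] at h
  push_cast at h
  rw [layer, ← h]
  refine Finset.sum_congr rfl fun Z _ => ?_
  rw [Finset.powersetCard_one, Finset.sum_map]
  refine Finset.sum_congr rfl fun i _ => ?_
  change X (insert i Z) = X (Z ∪ {i})
  rw [Finset.union_comm, ← Finset.insert_eq]

/-- Normalized layer sums of a decreasing weight decrease: every `(j + 1)`-set has `j + 1` subsets of
size `j`, and every `j`-set has `|N| - j` supersets of size `j + 1`. -/
theorem layer_step {α : Type*} [DecidableEq α] (N : Finset α) (X : Finset α → ℝ)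
    (hanti : ∀ P Q, P ⊆ Q → Q ⊆ N → X Q ≤ X P) (j : ℕ) :
    (j + 1) * layer N X (j + 1) ≤ ((N.card - j : ℕ) : ℝ) * layer N X j := by
  rw [← sum_sum_insert, layer, Finset.mul_sum]
  refine Finset.sum_le_sum fun Z hZ => ?_
  rw [Finset.mem_powersetCard] at hZ
  calc ∑ i ∈ N \ Z, X (insert i Z) ≤ ∑ i ∈ N \ Z, X Z := by
        refine Finset.sum_le_sum fun i hi => hanti _ _ (Finset.subset_insert _ _) ?_
        exact Finset.insert_subset (Finset.mem_sdiff.1 hi).1 hZ.1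
    _ = _ := by rw [Finset.sum_const, nsmul_eq_mul, Finset.card_sdiff_of_subset hZ.1, hZ.2]

theorem sum_layer {α : Type*} [DecidableEq α] (N : Finset α) (X : Finset α → ℝ) (c : ℕ → ℝ) :
    ∑ W ∈ N.powerset, c W.card * X W = ∑ j ∈ Finset.range (N.card + 1), c j * layer N X j := by
  rw [Finset.sum_powerset]
  refine Finset.sum_congr rfl fun j _ => ?_
  rw [layer, Finset.mul_sum]
  exact Finset.sum_congr rfl fun W hW => by rw [(Finset.mem_powersetCard.1 hW).2]

/-- Reindexing nested pairs `Z ⊆ W ⊆ N` by `Z` and `U = W \ Z`. -/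
theorem sum_nested {α : Type*} [DecidableEq α] (N : Finset α) (f : Finset α → Finset α → ℝ) :
    ∑ W ∈ N.powerset, ∑ Z ∈ W.powerset, f Z W
      = ∑ Z ∈ N.powerset, ∑ U ∈ (N \ Z).powerset, f Z (Z ∪ U) := by
  rw [Finset.sum_sigma', Finset.sum_sigma']
  refine Finset.sum_bij' (fun p _ => ⟨p.2, p.1 \ p.2⟩) (fun p _ => ⟨p.1 ∪ p.2, p.1⟩) ?_ ?_ ?_ ?_ ?_
  · rintro ⟨W, Z⟩ h
    simp only [Finset.mem_sigma, Finset.mem_powerset] at h ⊢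
    exact ⟨h.2.trans h.1, Finset.sdiff_subset_sdiff h.1 le_rfl⟩
  · rintro ⟨Z, U⟩ h
    simp only [Finset.mem_sigma, Finset.mem_powerset, Finset.subset_sdiff] at h ⊢
    exact ⟨Finset.union_subset h.1 h.2.1, Finset.subset_union_left⟩
  · rintro ⟨W, Z⟩ h
    simp only [Finset.mem_sigma, Finset.mem_powerset] at h ⊢
    rw [Finset.union_sdiff_of_subset h.2]
  · rintro ⟨Z, U⟩ h
    simp only [Finset.mem_sigma, Finset.mem_powerset, Finset.subset_sdiff] at h ⊢
    rw [Finset.union_sdiff_cancel_left h.2.2.symm]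
  · rintro ⟨W, Z⟩ h
    simp only [Finset.mem_sigma, Finset.mem_powerset] at h ⊢
    rw [Finset.union_sdiff_of_subset h.2]

/-- The sum over nested pairs `Z ⊆ W ⊆ N` in terms of layers: a `j`-set is the smaller member of
`2 ^ (|N| - j)` pairs and the larger member of `2 ^ j` pairs. -/
theorem sum_empty_pairing {α : Type*} [DecidableEq α] (N : Finset α) (X : Finset α → ℝ) (s : ℝ) :
    ∑ W ∈ N.powerset, ∑ Z ∈ W.powerset, (X Z + s * X W)
      = ∑ j ∈ Finset.range (N.card + 1), (2 ^ (N.card - j) + s * 2 ^ j) * layer N X j := by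
  simp_rw [Finset.sum_add_distrib]
  rw [sum_nested N (fun Z _ => X Z)]
  simp only [add_mul, Finset.sum_add_distrib]
  rw [← sum_layer N X (fun j => 2 ^ (N.card - j)), ← sum_layer N X (fun j => s * 2 ^ j)]
  congr 1
  · refine Finset.sum_congr rfl fun Z hZ => ?_
    rw [Finset.mem_powerset] at hZ
    rw [Finset.sum_const, Finset.card_powerset, Finset.card_sdiff_of_subset hZ, nsmul_eq_mul]
    push_cast; ring
  · refine Finset.sum_congr rfl fun W hW => ?_
    rw [Finset.sum_const, Finset.card_powerset, nsmul_eq_mul]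
    push_cast; ring

theorem sum_pairs_ge {α : Type*} [DecidableEq α] (M : Finset α) (b : α → ℝ)
    (h : Finset α → ℝ) (hh : ∀ i ∈ M, ∀ j ∈ M, i ≠ j → b i + b j ≤ h {i, j}) :
    ((M.card : ℝ) - 1) * ∑ i ∈ M, b i ≤ ∑ U ∈ M.powersetCard 2, h U := by
  induction M using Finset.induction_on with
  | empty => simp [Finset.powersetCard_eq_empty.2 (show (∅ : Finset α).card < 2 by simp)]
  | insert a s ha ih =>
    have ih' := ih fun i hi j hj => hh i (Finset.mem_insert_of_mem hi) j (Finset.mem_insert_of_mem hj)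
    rw [Finset.powersetCard_succ_insert ha, Finset.sum_union, Finset.sum_image, Finset.sum_insert ha,
      Finset.card_insert_of_notMem ha, Finset.powersetCard_one, Finset.sum_map]
    · have : ∑ i ∈ s, (b i + b a) ≤ ∑ i ∈ s, h (insert a ((⟨singleton, Finset.singleton_injective⟩ : α ↪ Finset α) i)) := by
        refine Finset.sum_le_sum fun i hi => ?_
        rw [add_comm]
        exact hh a (Finset.mem_insert_self _ _) i (Finset.mem_insert_of_mem hi) (by rintro rfl; exact ha hi)
      rw [Finset.sum_add_distrib, Finset.sum_const, nsmul_eq_mul] at this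
      push_cast
      nlinarith
    · intro U hU V hV hUV
      have hU' : a ∉ U := fun h => ha ((Finset.mem_powersetCard.1 hU).1 h)
      have hV' : a ∉ V := fun h => ha ((Finset.mem_powersetCard.1 hV).1 h)
      rw [← Finset.erase_insert hU', ← Finset.erase_insert hV']
      exact congrArg (fun S => S.erase a) hUV
    · rw [Finset.disjoint_left]
      intro U hU hU'
      obtain ⟨V, _, rfl⟩ := Finset.mem_image.1 hU'
      exact ha ((Finset.mem_powersetCard.1 hU).1 (Finset.mem_insert_self _ _))

/-- Singling out the largest value `b i₀`, the pairs through `i₀` already account for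
the sum of all other values. -/
theorem sum_pairs_min_ge {α : Type*} [DecidableEq α] (M : Finset α) (b : α → ℝ) (B s : ℝ)
    (h : Finset α → ℝ) (hs : 0 ≤ s) (hb : ∀ i ∈ M, 0 ≤ b i) (hB : ∀ i ∈ M, b i ≤ B) (hB0 : 0 ≤ B)
    (hh : ∀ i ∈ M, ∀ j ∈ M, i ≠ j → b i + b j + s * min (b i) (b j) ≤ h {i, j}) :
    ((M.card : ℝ) - 1 + s) * ∑ i ∈ M, b i - s * B ≤ ∑ U ∈ M.powersetCard 2, h U := by
  rcases M.eq_empty_or_nonempty with rfl | hM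
  · simpa [Finset.powersetCard_eq_empty.2 (show (∅ : Finset α).card < 2 by simp)]
      using mul_nonneg hs hB0
  obtain ⟨a, haM, hmax⟩ := Finset.exists_max_image M b hM
  obtain ⟨t, hat, rfl⟩ : ∃ t, a ∉ t ∧ M = insert a t :=
    ⟨M.erase a, Finset.notMem_erase _ _, (Finset.insert_erase haM).symm⟩
  have key := sum_pairs_ge (insert a t) b
    (fun U => h U - if a ∈ U then s * ∑ i ∈ U.erase a, b i else 0) (by
      intro i hi j hj hij
      have h1 := hh i hi j hj hij
      by_cases hai : a = i
      · subst hai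
        have : ({a, j} : Finset α).erase a = {j} := Finset.erase_insert (by simpa using hij)
        simp only [Finset.mem_insert, true_or, if_true, this, Finset.sum_singleton]
        rw [min_eq_right (hmax j hj)] at h1
        linarith
      by_cases haj : a = j
      · subst haj
        have : ({i, a} : Finset α).erase a = {i} := by
          rw [Finset.pair_comm]; exact Finset.erase_insert (by simpa using hai)
        simp only [Finset.mem_insert, Finset.mem_singleton, or_true, if_true, this, Finset.sum_singleton]
        rw [min_eq_left (hmax i hi)] at h1
        linarith
      · have : 0 ≤ s * min (b i) (b j) := mul_nonneg hs (le_min (hb i hi) (hb j hj))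
        simp [hai, haj]
        linarith)
  rw [Finset.sum_sub_distrib] at key
  have e : ∑ U ∈ (insert a t).powersetCard 2, (if a ∈ U then s * ∑ i ∈ U.erase a, b i else 0)
      = s * ∑ i ∈ t, b i := by
    rw [Finset.powersetCard_succ_insert hat, Finset.sum_union, Finset.sum_image,
      Finset.powersetCard_one, Finset.sum_map, Finset.mul_sum]
    · rw [Finset.sum_eq_zero, zero_add]
      · refine Finset.sum_congr rfl fun i hi => ?_
        have : a ∉ ({i} : Finset α) := by simp; rintro rfl; exact hat hi
        simp [Finset.erase_insert this]
      · intro U hU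
        rw [if_neg fun h => hat ((Finset.mem_powersetCard.1 hU).1 h)]
    · intro U hU V hV hUV
      have hU' : a ∉ U := fun h => hat ((Finset.mem_powersetCard.1 hU).1 h)
      have hV' : a ∉ V := fun h => hat ((Finset.mem_powersetCard.1 hV).1 h)
      rw [← Finset.erase_insert hU', ← Finset.erase_insert hV']
      exact congrArg (fun S => S.erase a) hUV
    · rw [Finset.disjoint_left]
      intro U hU hU'
      obtain ⟨V, _, rfl⟩ := Finset.mem_image.1 hU'
      exact hat ((Finset.mem_powersetCard.1 hU).1 (Finset.mem_insert_self _ _))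
  rw [e] at key
  rw [Finset.sum_insert hat] at key ⊢
  have := mul_le_mul_of_nonneg_left (hB a haM) hs
  nlinarith

/-- Bounding `F Z W` by the average of `X P + X Q` over all `P, Q` with `P ∩ Q = Z` and `P ∪ Q = W`.
The induction adds one element `a` to `N`: the pairs with `a ∈ W \ Z` are handled by averaging the
two ways of putting `a` into exactly one of `P`, `Q`. -/
theorem total_ge_random {α : Type*} [DecidableEq α] (N : Finset α) :
    ∀ (X : Finset α → ℝ) (F : Finset α → Finset α → ℝ),
      (∀ P Q, P ⊆ N → Q ⊆ N → X P + X Q ≤ F (P ∩ Q) (P ∪ Q)) →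
      2 * (3 / 2) ^ N.card * ∑ W ∈ N.powerset, X W
        ≤ ∑ W ∈ N.powerset, ∑ Z ∈ W.powerset, F Z W := by
  induction N using Finset.induction_on with
  | empty =>
    intro X F h
    have := h ∅ ∅ le_rfl le_rfl
    simp at this ⊢
    linarith
  | insert a N ha ih =>
    intro X F h
    have hsub : ∀ P, P ⊆ N → P ⊆ insert a N := fun P hP => hP.trans (Finset.subset_insert _ _)
    have hins : ∀ P, P ⊆ N → insert a P ⊆ insert a N := fun P hP => Finset.insert_subset_insert _ hP
    have hna : ∀ P, P ⊆ N → a ∉ P := fun P hP h => ha (hP h)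
    have h0 := ih X F fun P Q hP hQ => h P Q (hsub P hP) (hsub Q hQ)
    have h2 := ih (fun P => X (insert a P)) (fun Z W => F (insert a Z) (insert a W))
      fun P Q hP hQ => by
        have := h _ _ (hins P hP) (hins Q hQ)
        rwa [← Finset.insert_inter_distrib, ← Finset.insert_union_distrib] at this
    have h1 := ih (fun P => (X P + X (insert a P)) / 2) (fun Z W => F Z (insert a W))
      fun P Q hP hQ => by
        have e1 := h _ _ (hins P hP) (hsub Q hQ)
        have e2 := h _ _ (hsub P hP) (hins Q hQ)
        rw [Finset.insert_inter_of_notMem (hna Q hQ), Finset.insert_union] at e1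
        rw [Finset.inter_insert_of_notMem (hna P hP), Finset.union_insert] at e2
        linarith
    rw [Finset.sum_powerset_insert ha, Finset.sum_powerset_insert ha, Finset.card_insert_of_notMem ha]
    have e : ∑ W ∈ N.powerset, ∑ Z ∈ (insert a W).powerset, F Z (insert a W)
        = ∑ W ∈ N.powerset, ∑ Z ∈ W.powerset, F Z (insert a W)
          + ∑ W ∈ N.powerset, ∑ Z ∈ W.powerset, F (insert a Z) (insert a W) := by
      rw [← Finset.sum_add_distrib]
      refine Finset.sum_congr rfl fun W hW => ?_
      rw [Finset.sum_powerset_insert (hna W (Finset.mem_powerset.1 hW))]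
    rw [e]
    rw [← Finset.sum_div, Finset.sum_add_distrib] at h1
    rw [pow_succ]
    linarith

/-- The sum of `F` over nested pairs is the contribution of the pairing `P = Z`, `Q = W` plus the sum
of the excesses of `F` over that contribution. -/
theorem total_eq {α : Type*} [DecidableEq α] (N : Finset α) (X : Finset α → ℝ)
    (F : Finset α → Finset α → ℝ) (τ : ℝ) :
    ∑ W ∈ N.powerset, ∑ Z ∈ W.powerset, F Z W
      = ∑ j ∈ Finset.range (N.card + 1), (2 ^ (N.card - j) + (τ - 1) * 2 ^ j) * layer N X j
        + ∑ Z ∈ N.powerset, ∑ U ∈ (N \ Z).powerset,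
            (F Z (Z ∪ U) - (X Z + (τ - 1) * X (Z ∪ U))) := by
  rw [← sum_empty_pairing, ← sum_nested N (fun Z W => F Z W - (X Z + (τ - 1) * X W))]
  simp only [Finset.sum_sub_distrib]
  ring

theorem excess_nonneg {α : Type*} [DecidableEq α] (N : Finset α) (X : Finset α → ℝ)
    (F : Finset α → Finset α → ℝ) (τ : ℝ)
    (hanti : ∀ P Q, P ⊆ Q → Q ⊆ N → X Q ≤ X P)
    (hF : ∀ P Q, P ⊆ N → Q ⊆ N → X P + X Q + (τ - 2) * min (X P) (X Q) ≤ F (P ∩ Q) (P ∪ Q))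
    (Z : Finset α) (hZ : Z ∈ N.powerset) (U : Finset α) (hU : U ∈ (N \ Z).powerset) :
    0 ≤ F Z (Z ∪ U) - (X Z + (τ - 1) * X (Z ∪ U)) := by
  rw [Finset.mem_powerset] at hZ hU
  have hW : Z ∪ U ⊆ N := Finset.union_subset hZ (hU.trans Finset.sdiff_subset)
  have h := hF Z (Z ∪ U) hZ hW
  rw [min_eq_right (hanti _ _ Finset.subset_union_left hW),
    Finset.inter_eq_left.2 Finset.subset_union_left,
    Finset.union_eq_right.2 Finset.subset_union_left] at h
  linarith

/-- The bound obtained from the nested pairing `P = Z`, `Q = W` alone. -/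
theorem total_ge_base {α : Type*} [DecidableEq α] (N : Finset α) (X : Finset α → ℝ)
    (F : Finset α → Finset α → ℝ) (τ : ℝ)
    (hanti : ∀ P Q, P ⊆ Q → Q ⊆ N → X Q ≤ X P)
    (hF : ∀ P Q, P ⊆ N → Q ⊆ N → X P + X Q + (τ - 2) * min (X P) (X Q) ≤ F (P ∩ Q) (P ∪ Q)) :
    ∑ j ∈ Finset.range (N.card + 1), (2 ^ (N.card - j) + (τ - 1) * 2 ^ j) * layer N X j
      ≤ ∑ W ∈ N.powerset, ∑ Z ∈ W.powerset, F Z W := by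
  rw [total_eq N X F τ]
  have := Finset.sum_nonneg fun Z hZ => Finset.sum_nonneg (excess_nonneg N X F τ hanti hF Z hZ)
  linarith

/-- Improvement of the nested bound coming from pairing `Z ∪ {i}` with `Z ∪ {j}`, `|Z| = l`,
instead of pairing `Z` with `Z ∪ {i, j}`; the largest `X (Z ∪ {i})` is bounded by `X Z`. -/
theorem total_ge_mix {α : Type*} [DecidableEq α] (N : Finset α) (X : Finset α → ℝ)
    (F : Finset α → Finset α → ℝ) (τ : ℝ) (hτ : 2 ≤ τ)
    (hX : ∀ P, P ⊆ N → 0 ≤ X P)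
    (hanti : ∀ P Q, P ⊆ Q → Q ⊆ N → X Q ≤ X P)
    (hF : ∀ P Q, P ⊆ N → Q ⊆ N → X P + X Q + (τ - 2) * min (X P) (X Q) ≤ F (P ∩ Q) (P ∪ Q))
    (l m : ℕ) (hm : l + m = N.card) :
    ∑ j ∈ Finset.range (N.card + 1), (2 ^ (N.card - j) + (τ - 1) * 2 ^ j) * layer N X j
      + ((m + τ - 3) * ((l + 1) * layer N X (l + 1)) - (τ - 2) * layer N X l
        - m.choose 2 * layer N X l - (τ - 1) * (((l + 2).choose l : ℝ) * layer N X (l + 2)))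
      ≤ ∑ W ∈ N.powerset, ∑ Z ∈ W.powerset, F Z W := by
  rw [total_eq N X F τ]
  have hnn := excess_nonneg N X F τ hanti hF
  refine add_le_add le_rfl ?_
  calc _ ≤ ∑ Z ∈ N.powersetCard l, ∑ U ∈ (N \ Z).powersetCard 2,
            (F Z (Z ∪ U) - (X Z + (τ - 1) * X (Z ∪ U))) := ?_
    _ ≤ ∑ Z ∈ N.powersetCard l, ∑ U ∈ (N \ Z).powerset,
            (F Z (Z ∪ U) - (X Z + (τ - 1) * X (Z ∪ U))) := by
        refine Finset.sum_le_sum fun Z hZ => ?_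
        refine Finset.sum_le_sum_of_subset_of_nonneg
          (fun U hU => Finset.mem_powerset.2 (Finset.mem_powersetCard.1 hU).1) fun U hU _ => ?_
        exact hnn Z (Finset.mem_powerset.2 (Finset.mem_powersetCard.1 hZ).1) U hU
    _ ≤ _ := Finset.sum_le_sum_of_subset_of_nonneg
          (fun U hU => Finset.mem_powerset.2 (Finset.mem_powersetCard.1 hU).1)
          fun Z hZ _ => Finset.sum_nonneg (hnn Z hZ)
  have key : ∀ Z ∈ N.powersetCard l,
      (m + τ - 3) * ∑ i ∈ N \ Z, X (insert i Z) - (τ - 2) * X Z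
        ≤ ∑ U ∈ (N \ Z).powersetCard 2, F Z (Z ∪ U) := by
    intro Z hZ
    rw [Finset.mem_powersetCard] at hZ
    have hc : (N \ Z).card = m := by rw [Finset.card_sdiff_of_subset hZ.1, hZ.2]; omega
    have hi : ∀ i ∈ N \ Z, insert i Z ⊆ N := fun i hi =>
      Finset.insert_subset (Finset.mem_sdiff.1 hi).1 hZ.1
    have := sum_pairs_min_ge (N \ Z) (fun i => X (insert i Z)) (X Z) (τ - 2)
      (fun U => F Z (Z ∪ U)) (by linarith) (fun i h => hX _ (hi i h))
      (fun i h => hanti _ _ (Finset.subset_insert _ _) (hi i h)) (hX Z hZ.1) (by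
        intro i h j h' hij
        have := hF _ _ (hi i h) (hi j h')
        rw [Finset.mem_sdiff] at h h'
        have e1 : insert i Z ∩ insert j Z = Z := by
          ext x; simp only [Finset.mem_inter, Finset.mem_insert]
          constructor
          · rintro ⟨rfl | h1, rfl | h2⟩
            · exact absurd rfl hij
            · exact h2
            · exact h1
            · exact h1
          · exact fun h => ⟨Or.inr h, Or.inr h⟩
        have e2 : insert i Z ∪ insert j Z = Z ∪ {i, j} := by
          ext x; simp only [Finset.mem_union, Finset.mem_insert, Finset.mem_singleton]; tauto
        rwa [e1, e2] at this)
    rw [hc] at this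
    convert this using 3
    ring
  have key2 := Finset.sum_le_sum key
  rw [Finset.sum_sub_distrib, ← Finset.mul_sum, ← Finset.mul_sum, sum_sum_insert] at key2
  have e3 := sum_sum_union N l 2 X
  have e4 : ∑ Z ∈ N.powersetCard l, ∑ U ∈ (N \ Z).powersetCard 2, X Z
      = m.choose 2 * layer N X l := by
    rw [layer, Finset.mul_sum]
    refine Finset.sum_congr rfl fun Z hZ => ?_
    rw [Finset.mem_powersetCard] at hZ
    rw [Finset.sum_const, Finset.card_powersetCard, Finset.card_sdiff_of_subset hZ.1, hZ.2,
      nsmul_eq_mul, ← hm, Nat.add_sub_cancel_left]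
  simp only [Finset.sum_sub_distrib, Finset.sum_add_distrib, ← Finset.mul_sum]
  rw [e3, e4]
  unfold layer at *
  linarith

theorem layer_nonneg {α : Type*} (N : Finset α) (X : Finset α → ℝ)
    (hX : ∀ P, P ⊆ N → 0 ≤ X P) (j : ℕ) : 0 ≤ layer N X j :=
  Finset.sum_nonneg fun W hW => hX W (Finset.mem_powersetCard.1 hW).1

/-! ### Numerical inequalities -/

/-- The even-index formula is an upper bound also in the range `d ≤ 5`. -/
theorem Cconst_even (h : ℕ) (hh : 1 ≤ h) : Cconst (2 * h) ≤ 2 * 2 ^ h - 1 := by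
  unfold Cconst
  split_ifs with h1 h2
  · have : h ≤ 2 := by omega
    interval_cases h <;> norm_num
  · rw [Nat.mul_div_cancel_left _ (by norm_num), pow_succ]; linarith
  · omega

/-- The odd-index formula is an upper bound also in the range `d ≤ 5`. -/
theorem Cconst_odd (h : ℕ) (hh : 1 ≤ h) : Cconst (2 * h + 1) ≤ 3 * 2 ^ h - 3 / 2 := by
  unfold Cconst
  split_ifs with h1 h2
  · have : h ≤ 2 := by omega
    interval_cases h <;> norm_num
  · omega
  · rw [Nat.add_sub_cancel, Nat.mul_div_cancel_left _ (by norm_num)]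

theorem four_le (m : ℕ) : 2 * (2 : ℝ) ^ (m + 3) - 1 ≤ 4 / 3 * (9 / 4) ^ (m + 3) := by
  induction m with
  | zero => norm_num
  | succ m ih =>
    rw [show m + 1 + 3 = (m + 3) + 1 by ring, pow_succ, pow_succ (9 / 4 : ℝ)]
    have : (2 : ℝ) ^ 3 ≤ 2 ^ (m + 3) := pow_le_pow_right₀ (by norm_num) (by omega)
    linarith

theorem four_le' (m : ℕ) : (2 : ℝ) ^ (m + 7) * (9 / 4) ≤ (9 / 4) ^ (m + 7) := by
  induction m with
  | zero => norm_num
  | succ m ih =>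
    rw [show m + 1 + 7 = (m + 7) + 1 by ring, pow_succ, pow_succ (9 / 4 : ℝ)]
    have : (0 : ℝ) < 2 ^ (m + 7) := by positivity
    nlinarith

theorem three_half_sq (m : ℕ) : ((3 : ℝ) / 2) ^ (2 * m) = (9 / 4) ^ m := by
  rw [pow_mul]; norm_num

/-- The constant needed when `t = 1`. -/
theorem Cconst_le_pow (d : ℕ) (hd : 1 ≤ d) : Cconst d ≤ 2 * (3 / 2) ^ (d - 1) := by
  by_cases h5 : d ≤ 5
  · rw [Cconst, if_pos h5]
  obtain ⟨m, rfl | rfl⟩ := Nat.even_or_odd' d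
  · have := Cconst_even m (by omega)
    obtain ⟨k, rfl⟩ : ∃ k, m = k + 3 := ⟨m - 3, by omega⟩
    have h1 := four_le k
    have h2 := three_half_sq (k + 3)
    rw [show 2 * (k + 3) = (2 * (k + 3) - 1) + 1 by omega, pow_succ] at h2
    linarith
  · have := Cconst_odd m (by omega)
    obtain ⟨k, rfl⟩ : ∃ k, m = k + 3 := ⟨m - 3, by omega⟩
    have h1 := four_le k
    have h2 := three_half_sq (k + 3)
    rw [Nat.add_sub_cancel, h2]
    linarith

/-- The constant needed when `t = 2` and `n` is large. -/
theorem Cconst_le_pow' (n : ℕ) (hn : 12 ≤ n) : Cconst (2 + n) ≤ 2 * (3 / 2) ^ n := by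
  obtain ⟨m, rfl | rfl⟩ := Nat.even_or_odd' n
  · have := Cconst_even (m + 1) (by omega)
    rw [show 2 + 2 * m = 2 * (m + 1) by ring, three_half_sq]
    obtain ⟨k, rfl⟩ : ∃ k, m = k + 6 := ⟨m - 6, by omega⟩
    have h1 := four_le' k
    rw [show k + 7 = (k + 6) + 1 by ring, pow_succ, pow_succ (9 / 4 : ℝ)] at h1
    rw [pow_succ] at this
    linarith
  · have := Cconst_odd (m + 1) (by omega)
    rw [show 2 + (2 * m + 1) = 2 * (m + 1) + 1 by ring, pow_succ, three_half_sq]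
    obtain ⟨k, rfl⟩ : ∃ k, m = k + 6 := ⟨m - 6, by omega⟩
    have h1 := four_le' k
    rw [show k + 7 = (k + 6) + 1 by ring, pow_succ, pow_succ (9 / 4 : ℝ)] at h1
    rw [pow_succ] at this
    linarith

/-- Discarding terms with nonnegative coefficients. -/
theorem sum_nonneg_of_subset (R S : Finset ℕ) (hS : S ⊆ R) (c a : ℕ → ℝ) (ha : ∀ j, 0 ≤ a j)
    (hc : ∀ j ∈ R, j ∉ S → 0 ≤ c j) : ∑ j ∈ S, c j * a j ≤ ∑ j ∈ R, c j * a j :=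
  Finset.sum_le_sum_of_subset_of_nonneg hS fun j hj hj' => mul_nonneg (hc j hj hj') (ha j)

/-- For `n ≤ t` every coefficient is nonnegative. -/
theorem num_small (t n : ℕ) (ht : 2 ≤ t) (hn : n ≤ t) (a : ℕ → ℝ) (ha : ∀ j, 0 ≤ a j) :
    0 ≤ ∑ j ∈ Finset.range (n + 1),
      (2 ^ (n - j) + ((2 : ℝ) ^ t - 1) * 2 ^ j - Cconst (t + n)) * a j := by
  have hC : Cconst (t + n) ≤ 2 ^ n + 2 ^ t - 1 := by
    obtain ⟨e, rfl⟩ := Nat.exists_eq_add_of_le hn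
    have hy : (1 : ℝ) ≤ 2 ^ n := one_le_pow₀ (by norm_num)
    obtain ⟨f, rfl | rfl⟩ := Nat.even_or_odd' e
    · have := Cconst_even (n + f) (by omega)
      rw [show n + 2 * f + n = 2 * (n + f) by ring]
      rw [pow_add] at this
      rw [pow_add, mul_comm 2 f, pow_mul]
      have hx : (1 : ℝ) ≤ 2 ^ f := one_le_pow₀ (by norm_num)
      nlinarith [mul_nonneg (zero_le_one.trans hy) (sq_nonneg ((2 : ℝ) ^ f - 1))]
    · have := Cconst_odd (n + f) (by omega)
      rw [show n + (2 * f + 1) + n = 2 * (n + f) + 1 by ring]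
      rw [pow_add] at this
      rw [pow_add, pow_succ, mul_comm 2 f, pow_mul]
      have hx : (1 : ℝ) ≤ 2 ^ f := one_le_pow₀ (by norm_num)
      have h1 : 0 ≤ ((2 : ℝ) ^ f - 1) * (2 * 2 ^ f - 1) := mul_nonneg (by linarith) (by linarith)
      nlinarith [mul_nonneg (zero_le_one.trans hy) h1]
  refine Finset.sum_nonneg fun j hj => mul_nonneg ?_ (ha j)
  rw [Finset.mem_range] at hj
  obtain ⟨k, rfl⟩ := Nat.exists_eq_add_of_le (show j ≤ n by omega)
  rw [Nat.add_sub_cancel_left]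
  rcases Nat.eq_zero_or_pos j with rfl | hj0
  · simp only [zero_add] at hC ⊢; linarith
  · have h1 : (2 : ℝ) ^ k * 2 ≤ 2 ^ t := by
      rw [← pow_succ]; exact pow_le_pow_right₀ (by norm_num) (by omega)
    have h2 : (1 : ℝ) ≤ 2 ^ j := one_le_pow₀ (by norm_num)
    have h3 : (1 : ℝ) ≤ 2 ^ k := one_le_pow₀ (by norm_num)
    rw [pow_add] at hC
    nlinarith [mul_nonneg (sub_nonneg.2 h2) (show (0 : ℝ) ≤ 2 ^ t - 1 - 2 ^ k by linarith)]

/-- For `n = t + 2 h` only the coefficient of `a h` can be negative; it is absorbed by the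
coefficient of `a (h - 1)` through the decay hypothesis `hs`. -/
theorem num_even (t h : ℕ) (ht : 2 ≤ t) (hh : 1 ≤ h) (hth : 3 ≤ t ∨ h = 1)
    (a : ℕ → ℝ) (ha : ∀ j, 0 ≤ a j)
    (hs : ∀ j : ℕ, ((j : ℝ) + 1) * a (j + 1) ≤ ((t + 2 * h - j : ℕ) : ℝ) * a j) :
    0 ≤ ∑ j ∈ Finset.range (t + 2 * h + 1),
      (2 ^ (t + 2 * h - j) + ((2 : ℝ) ^ t - 1) * 2 ^ j - Cconst (t + (t + 2 * h))) * a j := by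
  have hT : (4 : ℝ) ≤ 2 ^ t := by
    calc (4 : ℝ) = 2 ^ 2 := by norm_num
      _ ≤ 2 ^ t := pow_le_pow_right₀ (by norm_num) ht
  have hC := Cconst_even (t + h) (by omega)
  rw [show 2 * (t + h) = t + (t + 2 * h) by ring, pow_add] at hC
  have hH : (2 : ℝ) ≤ 2 ^ h := by
    calc (2 : ℝ) = 2 ^ 1 := by norm_num
      _ ≤ 2 ^ h := pow_le_pow_right₀ (by norm_num) hh
  have hlow : ∀ j e, j + e = h → 1 ≤ e →
      (2 ^ t - 1) * 2 ^ j + 1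
        ≤ 2 ^ (t + 2 * h - j) + ((2 : ℝ) ^ t - 1) * 2 ^ j - Cconst (t + (t + 2 * h)) := by
    rintro j e rfl he
    rw [show t + 2 * (j + e) - j = t + j + e + e by omega]
    rw [pow_add] at hC
    rw [pow_add, pow_add, pow_add]
    have hE : (2 : ℝ) ≤ 2 ^ e := by
      calc (2 : ℝ) = 2 ^ 1 := by norm_num
        _ ≤ 2 ^ e := pow_le_pow_right₀ (by norm_num) he
    have : (0 : ℝ) < 2 ^ t * 2 ^ j := by positivity
    nlinarith [mul_nonneg this.le (show (0 : ℝ) ≤ 2 ^ e * (2 ^ e - 2) from mul_nonneg (by linarith) (by linarith))]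
  refine le_trans ?_ (sum_nonneg_of_subset _ {h - 1, h} ?_ _ a ha ?_)
  · obtain ⟨k, rfl⟩ : ∃ k, h = k + 1 := ⟨h - 1, by omega⟩
    rw [Nat.add_sub_cancel, Finset.sum_pair (by omega)]
    have h1 := hlow k 1 rfl le_rfl
    have h2 : -((2 : ℝ) ^ (k + 1) - 1) ≤ 2 ^ (t + 2 * (k + 1) - (k + 1)) + ((2 : ℝ) ^ t - 1) * 2 ^ (k + 1) - Cconst (t + (t + 2 * (k + 1))) := by
      rw [show t + 2 * (k + 1) - (k + 1) = t + (k + 1) by omega, pow_add 2 t]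
      linarith
    have h3 := hs k
    rw [show t + 2 * (k + 1) - k = t + k + 2 by omega] at h3
    push_cast at h3
    have hk := ha k
    have hk1 := ha (k + 1)
    have m1 := mul_le_mul_of_nonneg_right h1 hk
    have m2 := mul_le_mul_of_nonneg_right h2 hk1
    refine le_trans ?_ (add_le_add m1 m2)
    rw [pow_succ] at hH ⊢
    set K : ℝ := 2 ^ k
    have hkey : (t + k + 2 : ℝ) * (K * 2 - 1) ≤ (k + 1) * ((2 ^ t - 1) * K + 1) := by
      rcases Nat.eq_zero_or_pos k with rfl | hk0
      · have : (t : ℝ) + 2 ≤ 2 ^ t := by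
          have : t + 2 ≤ 2 ^ t := by
            clear * - ht
            induction t, ht using Nat.le_induction with
            | base => norm_num
            | succ n hn ih => rw [pow_succ]; omega
          exact_mod_cast this
        simp [K]
        linarith
      · have ht3 : 3 ≤ t := by omega
        have h4 : 2 * (t : ℝ) + 2 ≤ 2 ^ t := by
          have : 2 * t + 2 ≤ 2 ^ t := by
            clear * - ht3
            induction t, ht3 using Nat.le_induction with
            | base => norm_num
            | succ n hn ih => rw [pow_succ]; omega
          exact_mod_cast this
        have h5 : (1 : ℝ) ≤ k := by exact_mod_cast hk0
        have h6 : (3 : ℝ) ≤ t := by exact_mod_cast ht3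
        have h7 : 2 * (t + k + 2 : ℝ) ≤ (k + 1) * (2 ^ t - 1) := by nlinarith
        have h8 : (1 : ℝ) ≤ K := by linarith
        nlinarith
    have hk' : (0 : ℝ) < k + 1 := by positivity
    have hK1 : 0 ≤ K * 2 - 1 := by linarith
    have e1 := mul_le_mul_of_nonneg_left h3 hK1
    have e2 := mul_le_mul_of_nonneg_right hkey hk
    have : 0 ≤ (k + 1 : ℝ) * (((2 ^ t - 1) * K + 1) * a k + -(K * 2 - 1) * a (k + 1)) := by
      linarith
    exact nonneg_of_mul_nonneg_right this hk'
  · intro j hj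
    simp only [Finset.mem_insert, Finset.mem_singleton] at hj
    rw [Finset.mem_range]; omega
  · intro j hj hj'
    simp only [Finset.mem_insert, Finset.mem_singleton, not_or] at hj'
    rw [Finset.mem_range] at hj
    rcases lt_or_ge j h with hlt | hge
    · have := hlow j (h - j) (by omega) (by omega)
      have : (0 : ℝ) ≤ (2 ^ t - 1) * 2 ^ j := mul_nonneg (by linarith) (by positivity)
      linarith
    rcases Nat.lt_or_ge j (h + 2) with hlt | hge2
    · obtain rfl : j = h + 1 := by omega
      obtain ⟨s, rfl⟩ : ∃ s, t = s + 2 := ⟨t - 2, by omega⟩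
      rw [show s + 2 + 2 * h - (h + 1) = s + 1 + h by omega]
      have : (1 : ℝ) ≤ 2 ^ s := one_le_pow₀ (by norm_num)
      rw [pow_add 2 s 2] at hC ⊢
      rw [pow_add, pow_add, pow_add]
      nlinarith
    · have : (2 : ℝ) ^ h * 4 ≤ 2 ^ j := by
        rw [show (4 : ℝ) = 2 ^ 2 by norm_num, ← pow_add]
        exact pow_le_pow_right₀ (by norm_num) hge2
      have h5 : (0 : ℝ) < 2 ^ (t + 2 * h - j) := by positivity
      nlinarith

/-- For `n = t + 2 h + 1` only the coefficients of `a h` and `a (h + 1)` can be negative; both are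
absorbed by the coefficient of `a (h - 1)` through the decay hypothesis `hs`. -/
theorem num_odd (t h : ℕ) (ht : 2 ≤ t) (hh : 1 ≤ h)
    (hth : (4 ≤ t ∧ 2 ≤ h) ∨ (t = 3 ∧ 4 ≤ h) ∨ (h = 1 ∧ 5 ≤ t))
    (a : ℕ → ℝ) (ha : ∀ j, 0 ≤ a j)
    (hs : ∀ j : ℕ, ((j : ℝ) + 1) * a (j + 1) ≤ ((t + 2 * h + 1 - j : ℕ) : ℝ) * a j) :
    0 ≤ ∑ j ∈ Finset.range (t + 2 * h + 1 + 1),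
      (2 ^ (t + 2 * h + 1 - j) + ((2 : ℝ) ^ t - 1) * 2 ^ j - Cconst (t + (t + 2 * h + 1))) * a j := by
  have hT : (4 : ℝ) ≤ 2 ^ t := by
    calc (4 : ℝ) = 2 ^ 2 := by norm_num
      _ ≤ 2 ^ t := pow_le_pow_right₀ (by norm_num) ht
  have hC := Cconst_odd (t + h) (by omega)
  rw [show 2 * (t + h) + 1 = t + (t + 2 * h + 1) by ring, pow_add] at hC
  have hH : (2 : ℝ) ≤ 2 ^ h := by
    calc (2 : ℝ) = 2 ^ 1 := by norm_num
      _ ≤ 2 ^ h := pow_le_pow_right₀ (by norm_num) hh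
  have hlow : ∀ j e, j + e = h → 1 ≤ e →
      (3 * 2 ^ t - 1) * 2 ^ j + 3 / 2
        ≤ 2 ^ (t + 2 * h + 1 - j) + ((2 : ℝ) ^ t - 1) * 2 ^ j - Cconst (t + (t + 2 * h + 1)) := by
    rintro j e rfl he
    rw [show t + 2 * (j + e) + 1 - j = t + j + e + e + 1 by omega]
    rw [pow_add] at hC
    rw [pow_add, pow_add, pow_add, pow_add]
    have hE : (2 : ℝ) ≤ 2 ^ e := by
      calc (2 : ℝ) = 2 ^ 1 := by norm_num
        _ ≤ 2 ^ e := pow_le_pow_right₀ (by norm_num) he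
    have : (0 : ℝ) < 2 ^ t * 2 ^ j := by positivity
    nlinarith [mul_nonneg this.le (show (0 : ℝ) ≤ (2 * 2 ^ e + 1) * (2 ^ e - 2) from mul_nonneg (by linarith) (by linarith))]
  refine le_trans ?_ (sum_nonneg_of_subset _ {h - 1, h, h + 1} ?_ _ a ha ?_)
  · obtain ⟨k, rfl⟩ : ∃ k, h = k + 1 := ⟨h - 1, by omega⟩
    rw [Nat.add_sub_cancel, Finset.sum_insert (by simp; omega), Finset.sum_pair (by omega)]
    have h1 := hlow k 1 rfl le_rfl
    have h2 : -((2 : ℝ) ^ (k + 1) - 3 / 2) ≤ 2 ^ (t + 2 * (k + 1) + 1 - (k + 1)) + ((2 : ℝ) ^ t - 1) * 2 ^ (k + 1) - Cconst (t + (t + 2 * (k + 1) + 1)) := by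
      rw [show t + 2 * (k + 1) + 1 - (k + 1) = t + (k + 1) + 1 by omega, pow_succ 2 (t + (k + 1)), pow_add 2 t]
      linarith
    have h2' : -(2 * (2 : ℝ) ^ (k + 1) - 3 / 2) ≤ 2 ^ (t + 2 * (k + 1) + 1 - (k + 1 + 1)) + ((2 : ℝ) ^ t - 1) * 2 ^ (k + 1 + 1) - Cconst (t + (t + 2 * (k + 1) + 1)) := by
      rw [show t + 2 * (k + 1) + 1 - (k + 1 + 1) = t + (k + 1) by omega, pow_succ 2 (k + 1), pow_add 2 t]
      linarith
    have h3 := hs k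
    have h4 := hs (k + 1)
    rw [show t + 2 * (k + 1) + 1 - k = t + k + 3 by omega] at h3
    rw [show t + 2 * (k + 1) + 1 - (k + 1) = t + k + 2 by omega] at h4
    push_cast at h3 h4
    have hk := ha k
    have hk1 := ha (k + 1)
    have hk2 := ha (k + 1 + 1)
    have m1 := mul_le_mul_of_nonneg_right h1 hk
    have m2 := mul_le_mul_of_nonneg_right h2 hk1
    have m3 := mul_le_mul_of_nonneg_right h2' hk2
    refine le_trans ?_ (add_le_add m1 (add_le_add m2 m3))
    -- the decay inequalities at `h - 1` and `h`, combined and cleared of denominators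
    have hkey : (t + k + 3 : ℝ) * ((2 ^ (k + 1) - 3 / 2) * (k + 2) + (2 * 2 ^ (k + 1) - 3 / 2) * (t + k + 2))
        ≤ (k + 1) * (k + 2) * ((3 * 2 ^ t - 1) * 2 ^ k + 3 / 2) := by
      have ht2 : 4 ≤ t → (t : ℝ) ^ 2 ≤ 2 ^ t := by
        intro ht4
        have : t ^ 2 ≤ 2 ^ t := by
          clear * - ht4
          induction t, ht4 using Nat.le_induction with
          | base => norm_num
          | succ n hn ih => rw [pow_succ 2 n]; nlinarith
        exact_mod_cast this
      have hK : (1 : ℝ) ≤ 2 ^ k := one_le_pow₀ (by norm_num)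
      have hk0 : (0 : ℝ) ≤ k := by positivity
      -- for `h ≥ 2` the lower-order terms can be dropped and the factor `2 ^ k` cancelled
      have red : (t + k + 3 : ℝ) * (2 * (2 * t + 3 * k + 6)) ≤ (3 * 2 ^ t - 1) * ((k + 1) * (k + 2)) →
        (t + k + 3 : ℝ) * ((2 ^ (k + 1) - 3 / 2) * (k + 2) + (2 * 2 ^ (k + 1) - 3 / 2) * (t + k + 2))
        ≤ (k + 1) * (k + 2) * ((3 * 2 ^ t - 1) * 2 ^ k + 3 / 2) := by
        intro hr
        have := mul_le_mul_of_nonneg_right hr (zero_le_one.trans hK)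
        have p1 : (0 : ℝ) ≤ (t + k + 3) * (t + 2 * k + 4) := by positivity
        have p2 : (0 : ℝ) ≤ (k + 1) * (k + 2) := by positivity
        rw [pow_succ]
        nlinarith
      rcases hth with ⟨h4, h5⟩ | ⟨rfl, h5⟩ | ⟨h4, h5⟩
      · apply red
        have := ht2 h4
        obtain ⟨x, rfl⟩ : ∃ x, k = x + 1 := ⟨k - 1, by omega⟩
        obtain ⟨y, rfl⟩ : ∃ y, t = y + 4 := ⟨t - 4, by omega⟩
        push_cast at *
        refine le_trans ?_ (mul_le_mul_of_nonneg_right (show 3 * ((y : ℝ) + 4) ^ 2 - 1 ≤ _ by linarith) (by positivity))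
        rw [← sub_nonneg]
        ring_nf
        positivity
      · apply red
        obtain ⟨x, rfl⟩ : ∃ x, k = x + 3 := ⟨k - 3, by omega⟩
        push_cast
        rw [← sub_nonneg]
        ring_nf
        positivity
      · obtain rfl : k = 0 := by omega
        have := ht2 (by omega)
        have h6 : (5 : ℝ) ≤ t := by exact_mod_cast h5
        norm_num
        nlinarith
    have hk' : (0 : ℝ) < (k + 1) * (k + 2) := by positivity
    rw [pow_succ] at hH hkey ⊢
    set K : ℝ := 2 ^ k
    have hK1 : 0 ≤ K * 2 - 3 / 2 := by linarith
    have hK2 : 0 ≤ 2 * (K * 2) - 3 / 2 := by linarith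
    have e1 := mul_le_mul_of_nonneg_left h3 (show 0 ≤ (K * 2 - 3 / 2) * (k + 2) + (2 * (K * 2) - 3 / 2) * (t + k + 2) by positivity)
    have e3 := mul_le_mul_of_nonneg_left h4 (show 0 ≤ (2 * (K * 2) - 3 / 2) * (k + 1) by positivity)
    have e2 := mul_le_mul_of_nonneg_right hkey hk
    have : 0 ≤ ((k + 1) * (k + 2) : ℝ) * (((3 * 2 ^ t - 1) * K + 3 / 2) * a k +
      (-(K * 2 - 3 / 2) * a (k + 1) + -(2 * (K * 2) - 3 / 2) * a (k + 1 + 1))) := by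
      linarith
    exact nonneg_of_mul_nonneg_right this hk'
  · intro j hj
    simp only [Finset.mem_insert, Finset.mem_singleton] at hj
    rw [Finset.mem_range]; omega
  · intro j hj hj'
    simp only [Finset.mem_insert, Finset.mem_singleton, not_or] at hj'
    rw [Finset.mem_range] at hj
    rcases lt_or_ge j h with hlt | hge
    · have := hlow j (h - j) (by omega) (by omega)
      have : (0 : ℝ) ≤ (3 * 2 ^ t - 1) * 2 ^ j := mul_nonneg (by linarith) (by positivity)
      linarith
    · have : (2 : ℝ) ^ h * 4 ≤ 2 ^ j := by
        rw [show (4 : ℝ) = 2 ^ 2 by norm_num, ← pow_add]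
        exact pow_le_pow_right₀ (by norm_num) (by omega)
      have h5 : (0 : ℝ) < 2 ^ (t + 2 * h + 1 - j) := by positivity
      nlinarith

/-! ### The weighted inequality -/

theorem sum_sub_const (n : ℕ) (c a : ℕ → ℝ) (C : ℝ) :
    ∑ j ∈ Finset.range n, (c j - C) * a j
      = ∑ j ∈ Finset.range n, c j * a j - C * ∑ j ∈ Finset.range n, a j := by
  simp only [sub_mul, Finset.sum_sub_distrib, Finset.mul_sum]

theorem sum_eq_layers {α : Type*} [DecidableEq α] (N : Finset α) (X : Finset α → ℝ) :
    ∑ W ∈ N.powerset, X W = ∑ j ∈ Finset.range (N.card + 1), layer N X j := by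
  simpa using sum_layer N X (fun _ => 1)

/-- The case `n = t + 1`.  In the nested bound only the coefficient of the first layer is too small;
this is repaired by the single pair of singletons `{i}`, `{k}` of largest weight, which is used instead of `∅`, `{i, k}`. -/
theorem total_ge_special {α : Type*} [DecidableEq α] (t : ℕ) (ht : 2 ≤ t) (N : Finset α)
    (hN : N.card = t + 1) (X : Finset α → ℝ) (F : Finset α → Finset α → ℝ)
    (hX : ∀ P, P ⊆ N → 0 ≤ X P)
    (hanti : ∀ P Q, P ⊆ Q → Q ⊆ N → X Q ≤ X P)
    (hF : ∀ P Q, P ⊆ N → Q ⊆ N →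
      X P + X Q + ((2 : ℝ) ^ t - 2) * min (X P) (X Q) ≤ F (P ∩ Q) (P ∪ Q)) :
    Cconst (t + N.card) * ∑ W ∈ N.powerset, X W
      ≤ ∑ W ∈ N.powerset, ∑ Z ∈ W.powerset, F Z W := by
  have hT : (t : ℝ) + 1 ≤ 2 ^ t := by
    have : t + 1 ≤ 2 ^ t := Nat.lt_two_pow_self
    exact_mod_cast this
  have ht2 : (2 : ℝ) ≤ t := by exact_mod_cast ht
  -- `{i}` and `{k}` carry the two largest singleton weights
  obtain ⟨i, hi, himax⟩ := Finset.exists_max_image N (fun i => X {i})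
    (Finset.card_pos.1 (by omega))
  obtain ⟨k, hk, hkmax⟩ := Finset.exists_max_image (N.erase i) (fun i => X {i})
    (Finset.card_pos.1 (by rw [Finset.card_erase_of_mem hi]; omega))
  rw [Finset.mem_erase] at hk
  have hik : ({i, k} : Finset α) ⊆ N := by
    intro x; simp only [Finset.mem_insert, Finset.mem_singleton]
    rintro (rfl | rfl)
    · exact hi
    · exact hk.2
  have ha := layer_nonneg N X hX
  have l0 : layer N X 0 = X ∅ := by simp [layer]
  have l1 : layer N X 1 = X {i} + ∑ x ∈ N.erase i, X {x} := by
    rw [layer, Finset.powersetCard_one, Finset.sum_map, ← Finset.add_sum_erase _ _ hi]; rfl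
  have l1' : ∑ x ∈ N.erase i, X {x} ≤ t * X {k} := by
    calc _ ≤ ∑ x ∈ N.erase i, X {k} := Finset.sum_le_sum fun x hx => hkmax x hx
      _ = _ := by rw [Finset.sum_const, Finset.card_erase_of_mem hi, hN, nsmul_eq_mul]; simp
  have l2 : X {i, k} ≤ layer N X 2 :=
    Finset.single_le_sum (f := X) (fun W hW => hX W (Finset.mem_powersetCard.1 hW).1)
      (Finset.mem_powersetCard.2 ⟨hik, Finset.card_pair (Ne.symm hk.1)⟩)
  have hE := excess_nonneg N X F (2 ^ t) hanti hF
  have hEik : (F ∅ {i, k} - (X ∅ + (2 ^ t - 1) * X {i, k}))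
      ≤ ∑ Z ∈ N.powerset, ∑ U ∈ (N \ Z).powerset,
            (F Z (Z ∪ U) - (X Z + (2 ^ t - 1) * X (Z ∪ U))) := by
    have e0 : ∅ ∈ N.powerset := Finset.empty_mem_powerset _
    refine le_trans ?_ (Finset.single_le_sum
      (fun Z hZ => Finset.sum_nonneg (hE Z hZ)) e0)
    refine le_trans (le_of_eq ?_) (Finset.single_le_sum (hE ∅ e0) (a := {i, k}) ?_)
    · rw [Finset.empty_union]
    · simpa using hik
  have hEn := Finset.sum_nonneg fun Z hZ => Finset.sum_nonneg (hE Z hZ)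
  have hFik := hF {i} {k} (by simpa using hi) (by simpa using hk.2)
  have hle : X {k} ≤ X {i} := himax k hk.2
  rw [min_eq_right hle, Finset.inter_singleton_of_notMem (by simpa using hk.1),
    ← Finset.insert_eq] at hFik
  have hC := Cconst_odd t (by omega)
  rw [total_eq N X F (2 ^ t), sum_eq_layers, hN, show t + (t + 1) = 2 * t + 1 by ring]
  have key := sum_nonneg_of_subset (Finset.range (t + 1 + 1)) {0, 1, 2} (by
      intro j hj
      simp only [Finset.mem_insert, Finset.mem_singleton] at hj
      rw [Finset.mem_range]; omega)
    (fun j => 2 ^ (t + 1 - j) + ((2 : ℝ) ^ t - 1) * 2 ^ j - Cconst (2 * t + 1)) (layer N X) ha (by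
      intro j hj hj'
      simp only [Finset.mem_insert, Finset.mem_singleton, not_or] at hj'
      have : (2 : ℝ) ^ 2 ≤ 2 ^ j := pow_le_pow_right₀ (by norm_num) (by omega)
      have h5 : (0 : ℝ) < 2 ^ (t + 1 - j) := by positivity
      nlinarith)
  rw [sum_sub_const (t + 1 + 1) (fun j => 2 ^ (t + 1 - j) + ((2 : ℝ) ^ t - 1) * 2 ^ j),
    Finset.sum_insert (by simp), Finset.sum_pair (by simp)] at key
  simp only [Nat.sub_zero, Nat.add_sub_cancel] at key
  rw [pow_succ 2 t, l0, l1] at key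
  have c0 : 1 / 2 * X ∅ ≤ (2 ^ t * 2 + ((2 : ℝ) ^ t - 1) * 2 ^ 0 - Cconst (2 * t + 1)) * X ∅ :=
    mul_le_mul_of_nonneg_right (by linarith) (hX _ (by simp))
  have c1 : -(1 / 2) * (X {i} + ∑ x ∈ N.erase i, X {x})
      ≤ (2 ^ t + ((2 : ℝ) ^ t - 1) * 2 ^ 1 - Cconst (2 * t + 1)) * (X {i} + ∑ x ∈ N.erase i, X {x}) :=
    mul_le_mul_of_nonneg_right (by linarith) (l1 ▸ ha 1)
  have c2 : (2 ^ t - 1) / 2 * layer N X 2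
      ≤ (2 ^ (t + 1 - 2) + ((2 : ℝ) ^ t - 1) * 2 ^ 2 - Cconst (2 * t + 1)) * layer N X 2 := by
    refine mul_le_mul_of_nonneg_right ?_ (ha 2)
    have : (0 : ℝ) < 2 ^ (t + 1 - 2) := by positivity
    have h3 : (2 : ℝ) ^ (t + 1 - 2) * 2 = 2 ^ t := by
      rw [← pow_succ]; congr 1; omega
    linarith
  have hk0 : 0 ≤ X {k} := hX _ (by simpa using hk.2)
  have p1 : (0 : ℝ) ≤ (2 ^ t - 1 - t) * X {k} := mul_nonneg (by linarith) hk0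
  have p2 : (0 : ℝ) ≤ (2 ^ t - 1) * (layer N X 2 - X {i, k}) := mul_nonneg (by linarith) (by linarith)
  linarith

theorem coeff_mono (n : ℕ) (c a : ℕ → ℝ) (ha : ∀ j, 0 ≤ a j) (C C' : ℝ) (h : C ≤ C') :
    ∑ j ∈ Finset.range n, (c j - C') * a j ≤ ∑ j ∈ Finset.range n, (c j - C) * a j :=
  Finset.sum_le_sum fun j _ => mul_le_mul_of_nonneg_right (by linarith) (ha j)

/-- The remaining cases in which the nested pairing suffices. -/
theorem num_fin_base (t n : ℕ) (h : (t = 2 ∧ (n = 6 ∨ n = 8 ∨ n = 10 ∨ n = 9 ∨ n = 11)) ∨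
      (t = 3 ∧ (n = 8 ∨ n = 10)))
    (a : ℕ → ℝ) (ha : ∀ j, 0 ≤ a j)
    (hs : ∀ j : ℕ, ((j : ℝ) + 1) * a (j + 1) ≤ ((n - j : ℕ) : ℝ) * a j) :
    0 ≤ ∑ j ∈ Finset.range (n + 1),
      (2 ^ (n - j) + ((2 : ℝ) ^ t - 1) * 2 ^ j - Cconst (t + n)) * a j := by
  rcases h with ⟨rfl, rfl | rfl | rfl | rfl | rfl⟩ | ⟨rfl, rfl | rfl⟩
  · refine le_trans ?_ (coeff_mono _ _ a ha _ _ (Cconst_even 4 (by norm_num)))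
    have h0 := hs 0; have h1 := hs 1; have h2 := hs 2; have h3 := hs 3
    have h4 := hs 4; have h5 := hs 5
    norm_num [Finset.sum_range_succ] at h0 h1 h2 h3 h4 h5 ⊢
    linarith [ha 0, ha 1, ha 2, ha 3, ha 4, ha 5, ha 6]
  · refine le_trans ?_ (coeff_mono _ _ a ha _ _ (Cconst_even 5 (by norm_num)))
    have h0 := hs 0; have h1 := hs 1; have h2 := hs 2; have h3 := hs 3
    have h4 := hs 4; have h5 := hs 5; have h6 := hs 6; have h7 := hs 7
    norm_num [Finset.sum_range_succ] at h0 h1 h2 h3 h4 h5 h6 h7 ⊢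
    linarith [ha 0, ha 1, ha 2, ha 3, ha 4, ha 5, ha 6, ha 7, ha 8]
  · refine le_trans ?_ (coeff_mono _ _ a ha _ _ (Cconst_even 6 (by norm_num)))
    have h0 := hs 0; have h1 := hs 1; have h2 := hs 2; have h3 := hs 3
    have h4 := hs 4; have h5 := hs 5; have h6 := hs 6; have h7 := hs 7
    norm_num [Finset.sum_range_succ] at h0 h1 h2 h3 h4 h5 h6 h7 ⊢
    linarith [ha 0, ha 1, ha 2, ha 3, ha 4, ha 5, ha 6, ha 7, ha 8, ha 9, ha 10]
  · refine le_trans ?_ (coeff_mono _ _ a ha _ _ (Cconst_odd 5 (by norm_num)))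
    have h0 := hs 0; have h1 := hs 1; have h2 := hs 2; have h3 := hs 3
    have h4 := hs 4; have h5 := hs 5; have h6 := hs 6; have h7 := hs 7
    norm_num [Finset.sum_range_succ] at h0 h1 h2 h3 h4 h5 h6 h7 ⊢
    linarith [ha 0, ha 1, ha 2, ha 3, ha 4, ha 5, ha 6, ha 7, ha 8, ha 9]
  · refine le_trans ?_ (coeff_mono _ _ a ha _ _ (Cconst_odd 6 (by norm_num)))
    have h0 := hs 0; have h1 := hs 1; have h2 := hs 2; have h3 := hs 3
    have h4 := hs 4; have h5 := hs 5; have h6 := hs 6; have h7 := hs 7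
    norm_num [Finset.sum_range_succ] at h0 h1 h2 h3 h4 h5 h6 h7 ⊢
    linarith [ha 0, ha 1, ha 2, ha 3, ha 4, ha 5, ha 6, ha 7, ha 8, ha 9, ha 10, ha 11]
  · refine le_trans ?_ (coeff_mono _ _ a ha _ _ (Cconst_odd 5 (by norm_num)))
    have h0 := hs 0; have h1 := hs 1; have h2 := hs 2; have h3 := hs 3
    have h4 := hs 4; have h5 := hs 5; have h6 := hs 6; have h7 := hs 7
    norm_num [Finset.sum_range_succ] at h0 h1 h2 h3 h4 h5 h6 h7 ⊢
    linarith [ha 0, ha 1, ha 2, ha 3, ha 4, ha 5, ha 6, ha 7, ha 8]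
  · refine le_trans ?_ (coeff_mono _ _ a ha _ _ (Cconst_odd 6 (by norm_num)))
    have h0 := hs 0; have h1 := hs 1; have h2 := hs 2; have h3 := hs 3
    have h4 := hs 4; have h5 := hs 5; have h6 := hs 6; have h7 := hs 7
    norm_num [Finset.sum_range_succ] at h0 h1 h2 h3 h4 h5 h6 h7 ⊢
    linarith [ha 0, ha 1, ha 2, ha 3, ha 4, ha 5, ha 6, ha 7, ha 8, ha 9, ha 10]

/-- The cases needing the improved pairing of `total_ge_mix`, taken with weight `θ`; `l` is the size of
the common part `Z`. -/
theorem num_fin_mix (t n l m : ℕ) (θ : ℝ) (h : (t = 2 ∧ n = 5 ∧ l = 1 ∧ m = 4 ∧ θ = 1 / 4) ∨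
      (t = 2 ∧ n = 7 ∧ l = 2 ∧ m = 5 ∧ θ = 1 / 6) ∨
      (t = 3 ∧ n = 6 ∧ l = 1 ∧ m = 5 ∧ θ = 1 / 8) ∨
      (t = 4 ∧ n = 7 ∧ l = 1 ∧ m = 6 ∧ θ = 5 / 76))
    (a : ℕ → ℝ) (ha : ∀ j, 0 ≤ a j)
    (hs : ∀ j : ℕ, ((j : ℝ) + 1) * a (j + 1) ≤ ((n - j : ℕ) : ℝ) * a j) :
    0 ≤ ∑ j ∈ Finset.range (n + 1),
      (2 ^ (n - j) + ((2 : ℝ) ^ t - 1) * 2 ^ j - Cconst (t + n)) * a j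
      + θ * ((m + 2 ^ t - 3) * ((l + 1) * a (l + 1)) - (2 ^ t - 2) * a l
        - m.choose 2 * a l - (2 ^ t - 1) * (((l + 2).choose l : ℝ) * a (l + 2))) := by
  rcases h with ⟨rfl, rfl, rfl, rfl, rfl⟩ | ⟨rfl, rfl, rfl, rfl, rfl⟩ | ⟨rfl, rfl, rfl, rfl, rfl⟩ |
    ⟨rfl, rfl, rfl, rfl, rfl⟩
  · refine le_trans ?_ (add_le_add (coeff_mono _ _ a ha _ _ (Cconst_odd 3 (by norm_num))) le_rfl)
    have h0 := hs 0; have h1 := hs 1; have h2 := hs 2; have h3 := hs 3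
    have h4 := hs 4
    norm_num [Finset.sum_range_succ, Nat.choose] at h0 h1 h2 h3 h4 ⊢
    linarith [ha 0, ha 1, ha 2, ha 3, ha 4, ha 5]
  · refine le_trans ?_ (add_le_add (coeff_mono _ _ a ha _ _ (Cconst_odd 4 (by norm_num))) le_rfl)
    have h0 := hs 0; have h1 := hs 1; have h2 := hs 2; have h3 := hs 3
    have h4 := hs 4
    norm_num [Finset.sum_range_succ, Nat.choose] at h0 h1 h2 h3 h4 ⊢
    linarith [ha 0, ha 1, ha 2, ha 3, ha 4, ha 5, ha 6, ha 7]
  · refine le_trans ?_ (add_le_add (coeff_mono _ _ a ha _ _ (Cconst_odd 4 (by norm_num))) le_rfl)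
    have h0 := hs 0; have h1 := hs 1; have h2 := hs 2; have h3 := hs 3
    have h4 := hs 4
    norm_num [Finset.sum_range_succ, Nat.choose] at h0 h1 h2 h3 h4 ⊢
    linarith [ha 0, ha 1, ha 2, ha 3, ha 4, ha 5, ha 6]
  · refine le_trans ?_ (add_le_add (coeff_mono _ _ a ha _ _ (Cconst_odd 5 (by norm_num))) le_rfl)
    have h0 := hs 0; have h1 := hs 1; have h2 := hs 2; have h3 := hs 3
    have h4 := hs 4
    norm_num [Finset.sum_range_succ, Nat.choose] at h0 h1 h2 h3 h4 ⊢
    linarith [ha 0, ha 1, ha 2, ha 3, ha 4, ha 5, ha 6, ha 7]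

/-- The weighted inequality behind one block.  Here `t` is the number of large coordinates, `N` the set
of the other ones, `X W` the size of a cell of `A` and `F Z W` the size of a cell of `A + A`. -/
theorem total_ge {α : Type*} [DecidableEq α] (t : ℕ) (ht : 1 ≤ t) (N : Finset α)
    (X : Finset α → ℝ) (F : Finset α → Finset α → ℝ)
    (hX : ∀ P, P ⊆ N → 0 ≤ X P)
    (hanti : ∀ P Q, P ⊆ Q → Q ⊆ N → X Q ≤ X P)
    (hF : ∀ P Q, P ⊆ N → Q ⊆ N →
      X P + X Q + ((2 : ℝ) ^ t - 2) * min (X P) (X Q) ≤ F (P ∩ Q) (P ∪ Q)) :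
    Cconst (t + N.card) * ∑ W ∈ N.powerset, X W
      ≤ ∑ W ∈ N.powerset, ∑ Z ∈ W.powerset, F Z W := by
  have hT : (2 : ℝ) ≤ 2 ^ t := by
    calc (2 : ℝ) = 2 ^ 1 := by norm_num
      _ ≤ 2 ^ t := pow_le_pow_right₀ (by norm_num) ht
  have ha := layer_nonneg N X hX
  have hs := layer_step N X hanti
  have hF' : ∀ P Q, P ⊆ N → Q ⊆ N → X P + X Q ≤ F (P ∩ Q) (P ∪ Q) := fun P Q hP hQ => by
    have := hF P Q hP hQ
    have := mul_nonneg (sub_nonneg.2 hT) (le_min (hX P hP) (hX Q hQ))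
    linarith
  have hS : 0 ≤ ∑ W ∈ N.powerset, X W :=
    Finset.sum_nonneg fun W hW => hX W (Finset.mem_powerset.1 hW)
  have hbase := total_ge_base N X F _ hanti hF
  -- `fin1` uses the nested pairing; `fin2` a convex combination with the improved pairing
  have fin1 : (0 ≤ ∑ j ∈ Finset.range (N.card + 1),
      (2 ^ (N.card - j) + ((2 : ℝ) ^ t - 1) * 2 ^ j - Cconst (t + N.card)) * layer N X j) →
      Cconst (t + N.card) * ∑ W ∈ N.powerset, X W
      ≤ ∑ W ∈ N.powerset, ∑ Z ∈ W.powerset, F Z W := by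
    intro h
    rw [sum_sub_const (N.card + 1) (fun j => 2 ^ (N.card - j) + ((2 : ℝ) ^ t - 1) * 2 ^ j)] at h
    rw [sum_eq_layers]
    linarith
  have fin2 : ∀ l m θ, 0 ≤ θ → θ ≤ 1 → l + m = N.card → (0 ≤ ∑ j ∈ Finset.range (N.card + 1),
      (2 ^ (N.card - j) + ((2 : ℝ) ^ t - 1) * 2 ^ j - Cconst (t + N.card)) * layer N X j
      + θ * ((m + 2 ^ t - 3) * ((l + 1) * layer N X (l + 1)) - (2 ^ t - 2) * layer N X l
        - m.choose 2 * layer N X l - (2 ^ t - 1) * (((l + 2).choose l : ℝ) * layer N X (l + 2)))) →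
      Cconst (t + N.card) * ∑ W ∈ N.powerset, X W
      ≤ ∑ W ∈ N.powerset, ∑ Z ∈ W.powerset, F Z W := by
    intro l m θ h0 h1 hm h
    rw [sum_sub_const (N.card + 1) (fun j => 2 ^ (N.card - j) + ((2 : ℝ) ^ t - 1) * 2 ^ j)] at h
    rw [sum_eq_layers]
    have hmix := total_ge_mix N X F _ hT hX hanti hF l m hm
    have m1 := mul_le_mul_of_nonneg_left hmix h0
    have m2 := mul_le_mul_of_nonneg_left hbase (sub_nonneg.2 h1)
    linarith
  rcases Nat.lt_or_ge t 2 with h2 | h2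
  · obtain rfl : t = 1 := by omega
    refine le_trans (mul_le_mul_of_nonneg_right (Cconst_le_pow _ (by omega)) hS) ?_
    rw [Nat.add_sub_cancel_left]
    exact total_ge_random N X F hF'
  obtain ⟨n, hn⟩ : ∃ n, n = N.card := ⟨_, rfl⟩
  rcases Nat.lt_or_ge t n with h3 | h3
  swap
  · exact fin1 (num_small t _ h2 (hn ▸ h3) _ ha)
  rcases Nat.eq_or_lt_of_le h3 with h4 | h4
  · exact total_ge_special t h2 N (by omega) X F hX hanti hF
  by_cases hbig : t = 2 ∧ 12 ≤ n
  · obtain ⟨rfl, h12⟩ := hbig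
    refine le_trans (mul_le_mul_of_nonneg_right (Cconst_le_pow' _ (by omega)) hS) ?_
    exact total_ge_random N X F hF'
  by_cases hfin : (t = 2 ∧ (n = 6 ∨ n = 8 ∨ n = 10 ∨ n = 9 ∨ n = 11)) ∨
      (t = 3 ∧ (n = 8 ∨ n = 10))
  · exact fin1 (num_fin_base t _ (hn ▸ hfin) _ ha hs)
  by_cases hmix : (t = 2 ∧ n = 5) ∨ (t = 2 ∧ n = 7) ∨ (t = 3 ∧ n = 6) ∨ (t = 4 ∧ n = 7)
  · rcases hmix with ⟨h5, h6⟩ | ⟨h5, h6⟩ | ⟨h5, h6⟩ | ⟨h5, h6⟩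
    · exact fin2 1 4 (1 / 4) (by norm_num) (by norm_num) (by omega)
        (num_fin_mix t _ 1 4 _ (Or.inl ⟨h5, hn ▸ h6, rfl, rfl, rfl⟩) _ ha hs)
    · exact fin2 2 5 (1 / 6) (by norm_num) (by norm_num) (by omega)
        (num_fin_mix t _ 2 5 _ (Or.inr (Or.inl ⟨h5, hn ▸ h6, rfl, rfl, rfl⟩)) _ ha hs)
    · exact fin2 1 5 (1 / 8) (by norm_num) (by norm_num) (by omega)
        (num_fin_mix t _ 1 5 _ (Or.inr (Or.inr (Or.inl ⟨h5, hn ▸ h6, rfl, rfl, rfl⟩))) _ ha hs)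
    · exact fin2 1 6 (5 / 76) (by norm_num) (by norm_num) (by omega)
        (num_fin_mix t _ 1 6 _ (Or.inr (Or.inr (Or.inr ⟨h5, hn ▸ h6, rfl, rfl, rfl⟩))) _ ha hs)
  apply fin1
  rw [← hn] at hs ⊢
  obtain ⟨e, rfl⟩ := Nat.exists_eq_add_of_le h3.le
  obtain ⟨h, rfl | rfl⟩ := Nat.even_or_odd' e
  · exact num_even t h h2 (by omega) (by omega) _ ha hs
  · exact num_odd t h h2 (by omega) (by omega) _ ha hs

/-! ### Blocks of a lower set -/

/-- The lattice point with coordinates `u + c` on `T` and `1_Z + 1_W` off `T`; the elements of `T` are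
enumerated by `Finset.equivFin`. -/
noncomputable def pt {d : ℕ} (T : Finset (Fin d)) (c : ℕ) (Z W : Finset (Fin d)) (u : Fin T.card → ℕ) :
    Fin d → ℕ := fun i =>
  if h : i ∈ T then u (T.equivFin ⟨i, h⟩) + c
  else (if i ∈ Z then 1 else 0) + (if i ∈ W then 1 else 0)

theorem pt_injective {d : ℕ} (T : Finset (Fin d)) (c : ℕ) (Z W : Finset (Fin d)) :
    Function.Injective (pt T c Z W) := by
  intro u v huv
  funext k
  have h := congrFun huv (T.equivFin.symm k)
  simpa [pt] using h

/-- The points of `B` of the form `pt T c Z W u`, recorded by `u`.  With `c = 2` and `Z = ∅` these are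
the points of `B` that are at least `2` on `T`, and equal to `1` on `W` and to `0` elsewhere off `T`. -/
noncomputable def cell {d : ℕ} (T : Finset (Fin d)) (B : Finset (Fin d → ℕ)) (c : ℕ)
    (Z W : Finset (Fin d)) : Finset (Fin T.card → ℕ) :=
  B.preimage (pt T c Z W) (pt_injective T c Z W).injOn

theorem mem_cell {d : ℕ} (T : Finset (Fin d)) (B : Finset (Fin d → ℕ)) (c : ℕ)
    (Z W : Finset (Fin d)) (u) : u ∈ cell T B c Z W ↔ pt T c Z W u ∈ B := Finset.mem_preimage

theorem pt_mono {d : ℕ} (T : Finset (Fin d)) (c : ℕ) {W W' : Finset (Fin d)} (hW : W ⊆ W')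
    {u u' : Fin T.card → ℕ} (hu : u ≤ u') : pt T c ∅ W u ≤ pt T c ∅ W' u' := by
  intro i
  by_cases h : i ∈ T
  · simp [pt, h, hu _]
  · simp only [pt, h, dite_false]
    by_cases h1 : i ∈ W
    · simp [h1, hW h1]
    · simp [h1]

theorem cell_lower {d : ℕ} (T : Finset (Fin d)) (A : Finset (Fin d → ℕ))
    (hA : IsLowerSet (A : Set (Fin d → ℕ))) (c : ℕ) (W : Finset (Fin d)) :
    IsLowerSet (cell T A c ∅ W : Set (Fin T.card → ℕ)) := by
  intro u v hvu hu
  rw [Finset.mem_coe, mem_cell] at *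
  exact hA (pt_mono T c le_rfl hvu) hu

theorem cell_anti {d : ℕ} (T : Finset (Fin d)) (A : Finset (Fin d → ℕ))
    (hA : IsLowerSet (A : Set (Fin d → ℕ))) (c : ℕ) {P Q : Finset (Fin d)} (h : P ⊆ Q) :
    cell T A c ∅ Q ⊆ cell T A c ∅ P := by
  intro u hu
  rw [mem_cell] at *
  exact hA (pt_mono T c h le_rfl) hu

theorem ind_add_ind {d : ℕ} (P Q : Finset (Fin d)) (i : Fin d) :
    (if i ∈ P ∩ Q then 1 else 0) + (if i ∈ P ∪ Q then 1 else 0)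
      = (if i ∈ P then 1 else 0) + (if i ∈ Q then 1 else 0) := by
  by_cases h1 : i ∈ P <;> by_cases h2 : i ∈ Q <;> simp [h1, h2]

/-- Since `A` is a lower set, one of the two shifts by `2` on `T` may be replaced by a shift by `1` or by
`2`, so that a sum of two cells is thickened by `{0, 1}` in every coordinate of `T`. -/
theorem csum_cell {d : ℕ} (T : Finset (Fin d)) (A : Finset (Fin d → ℕ))
    (hA : IsLowerSet (A : Set (Fin d → ℕ))) (P Q : Finset (Fin d)) :
    csum (cell T A 2 ∅ P) (cell T A 2 ∅ Q) ⊆ cell T (A + A) 3 (P ∩ Q) (P ∪ Q) := by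
  intro w hw
  obtain ⟨u, hu, v, hv, e, he, rfl⟩ := (mem_csum _ _ _).1 hw
  rw [mem_cell] at *
  refine Finset.mem_add.2 ⟨_, hu, pt T 1 ∅ Q (v + e), hA ?_ hv, ?_⟩
  · intro i
    by_cases h : i ∈ T
    · have := he (T.equivFin ⟨i, h⟩)
      simp [pt, h]; omega
    · simp [pt, h]
  · funext i
    by_cases h : i ∈ T
    · simp [pt, h]; omega
    · simp only [pt, Pi.add_apply, h, dite_false, ind_add_ind]
      simp

/-- Adding a vertex of the unit cube to the cell of `P ∩ Q`; this is needed only when the cell of `P` or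
that of `Q` is empty. -/
theorem cell_inter {d : ℕ} (T : Finset (Fin d)) (A : Finset (Fin d → ℕ))
    (hA1 : ∀ x : Fin d → ℕ, (∀ i, x i ≤ 1) → x ∈ A) (P Q : Finset (Fin d)) :
    cell T A 2 ∅ (P ∩ Q) ⊆ cell T (A + A) 3 (P ∩ Q) (P ∪ Q) := by
  intro u hu
  rw [mem_cell] at *
  refine Finset.mem_add.2 ⟨_, hu, pt T 1 ∅ (P ∪ Q) 0, hA1 _ ?_, ?_⟩
  · intro i
    by_cases h : i ∈ T
    · simp [pt, h]
    · by_cases h' : i ∈ P ∪ Q <;> simp only [pt, h, h'] <;> simp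
  · funext i
    by_cases h : i ∈ T
    · simp [pt, h]
    · simp only [pt, Pi.add_apply, h, dite_false]
      simp

/-- The hypothesis of `total_ge` for the cells of a lower set. -/
theorem cell_key {d : ℕ} (T : Finset (Fin d)) (hT : 1 ≤ T.card) (A : Finset (Fin d → ℕ))
    (hA : IsLowerSet (A : Set (Fin d → ℕ)))
    (hA1 : ∀ x : Fin d → ℕ, (∀ i, x i ≤ 1) → x ∈ A) (P Q : Finset (Fin d)) :
    ((cell T A 2 ∅ P).card : ℝ) + (cell T A 2 ∅ Q).card
      + ((2 : ℝ) ^ T.card - 2) * min ((cell T A 2 ∅ P).card : ℝ) (cell T A 2 ∅ Q).card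
      ≤ (cell T (A + A) 3 (P ∩ Q) (P ∪ Q)).card := by
  have hi := Finset.card_le_card (cell_inter T A hA1 P Q)
  rcases (cell T A 2 ∅ P).eq_empty_or_nonempty with hP | hP
  · have := (Finset.card_le_card (cell_anti T A hA 2 (Finset.inter_subset_right (s₁ := P) (s₂ := Q)))).trans hi
    rw [hP]
    simpa using this
  rcases (cell T A 2 ∅ Q).eq_empty_or_nonempty with hQ | hQ
  · have := (Finset.card_le_card (cell_anti T A hA 2 (Finset.inter_subset_left (s₁ := P) (s₂ := Q)))).trans hi
    rw [hQ]
    simpa using this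
  refine (card_csum_ge _ hT _ _ (cell_lower T A hA 2 P) (cell_lower T A hA 2 Q) hP hQ).trans ?_
  exact_mod_cast Finset.card_le_card (csum_cell T A hA P Q)

theorem card_le_sum_cell {d : ℕ} (T : Finset (Fin d)) (A : Finset (Fin d → ℕ)) :
    (A.filter fun x => Finset.univ.filter (fun i => 2 ≤ x i) = T).card
      ≤ ∑ W ∈ Tᶜ.powerset, (cell T A 2 ∅ W).card := by
  have hsub : (A.filter fun x => Finset.univ.filter (fun i => 2 ≤ x i) = T)
      ⊆ Tᶜ.powerset.biUnion fun W => (cell T A 2 ∅ W).image (pt T 2 ∅ W) := by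
    intro x hx
    obtain ⟨hxA, hxT⟩ := Finset.mem_filter.1 hx
    have hT : ∀ i, i ∈ T ↔ 2 ≤ x i := fun i => by rw [← hxT]; simp
    have e : pt T 2 ∅ (Finset.univ.filter fun i => x i = 1) (fun k => x (T.equivFin.symm k) - 2) = x := by
      funext i
      by_cases h : i ∈ T
      · have := (hT i).1 h
        simp [pt, h]; omega
      · have := mt (hT i).2 h
        simp only [pt, h, dite_false]
        by_cases h1 : x i = 1
        · simp [h1]
        · simp [h1]; omega
    refine Finset.mem_biUnion.2 ⟨Finset.univ.filter fun i => x i = 1, ?_, ?_⟩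
    · rw [Finset.mem_powerset]
      intro i hi
      rw [Finset.mem_compl, hT]
      have := (Finset.mem_filter.1 hi).2
      omega
    · exact Finset.mem_image.2 ⟨_, (mem_cell _ _ _ _ _ _).2 (e.symm ▸ hxA), e⟩
  refine (Finset.card_le_card hsub).trans (Finset.card_biUnion_le.trans ?_)
  exact Finset.sum_le_sum fun W _ => Finset.card_image_le

theorem sum_cell_le_card {d : ℕ} (T : Finset (Fin d)) (B : Finset (Fin d → ℕ)) :
    ∑ W ∈ Tᶜ.powerset, ∑ Z ∈ W.powerset, (cell T B 3 Z W).card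
      ≤ (B.filter fun x => Finset.univ.filter (fun i => 3 ≤ x i) = T).card := by
  set S := B.filter fun x => Finset.univ.filter (fun i => 3 ≤ x i) = T
  -- `g` and `f` recover `W` and `Z` from a point with parameters `T`, `Z ⊆ W`
  let g : (Fin d → ℕ) → Finset (Fin d) := fun y => Finset.univ.filter fun i => i ∉ T ∧ 1 ≤ y i
  let f : (Fin d → ℕ) → Finset (Fin d) := fun y => Finset.univ.filter fun i => i ∉ T ∧ y i = 2
  have step : ∀ W ∈ Tᶜ.powerset, ∀ Z ∈ W.powerset,
      (cell T B 3 Z W).card ≤ ((S.filter fun y => g y = W).filter fun y => f y = Z).card := by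
    intro W hW Z hZ
    rw [Finset.mem_powerset] at hW hZ
    have hW' : ∀ i ∈ W, i ∉ T := fun i hi => Finset.mem_compl.1 (hW hi)
    refine Finset.card_le_card_of_injOn (pt T 3 Z W) ?_ (pt_injective T 3 Z W).injOn
    intro u hu
    rw [Finset.mem_coe, mem_cell] at hu
    have hon : ∀ i ∈ T, 3 ≤ pt T 3 Z W u i := fun i hi => by simp [pt, hi]
    have hoff : ∀ i, i ∉ T → pt T 3 Z W u i
        = (if i ∈ Z then 1 else 0) + (if i ∈ W then 1 else 0) := fun i hi => by simp [pt, hi]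
    have hZW : ∀ i ∈ Z, i ∈ W := fun i hi => hZ hi
    rw [Finset.mem_coe, Finset.mem_filter, Finset.mem_filter, Finset.mem_filter]
    refine ⟨⟨⟨hu, ?_⟩, ?_⟩, ?_⟩
    · ext i
      rw [Finset.mem_filter]
      by_cases h : i ∈ T
      · simp only [Finset.mem_univ, true_and, h, iff_true]
        exact hon i h
      · simp only [Finset.mem_univ, true_and, h, iff_false]
        rw [hoff i h]
        split_ifs <;> omega
    · ext i
      rw [Finset.mem_filter]
      by_cases h : i ∈ T
      · have := fun h' => hW' i h' h
        tauto
      · rw [hoff i h]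
        have := hZW i
        by_cases h1 : i ∈ W <;> by_cases h2 : i ∈ Z <;> simp [h, h1, h2] <;> tauto
    · ext i
      rw [Finset.mem_filter]
      by_cases h : i ∈ T
      · have := fun h' => hW' i (hZ h') h
        tauto
      · rw [hoff i h]
        have := hZW i
        by_cases h1 : i ∈ W <;> by_cases h2 : i ∈ Z <;> simp [h, h1, h2] <;> tauto
  calc _ ≤ ∑ W ∈ Tᶜ.powerset, ∑ Z ∈ W.powerset,
        ((S.filter fun y => g y = W).filter fun y => f y = Z).card :=
        Finset.sum_le_sum fun W hW => Finset.sum_le_sum fun Z hZ => step W hW Z hZ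
    _ ≤ ∑ W ∈ Tᶜ.powerset, (S.filter fun y => g y = W).card := by
        refine Finset.sum_le_sum fun W _ => ?_
        rw [Finset.sum_card_fiberwise_eq_card_filter]
        exact Finset.card_filter_le _ _
    _ ≤ S.card := by
        rw [Finset.sum_card_fiberwise_eq_card_filter]
        exact Finset.card_filter_le _ _

/-- The comparison of `A` and `A + A` in the blocks belonging to a nonempty `T`: the points of `A` whose
coordinates in `T`, and only these, are at least `2`, against the points of `A + A` whose coordinates
in `T`, and only these, are at least `3`. -/
theorem block_ge {d : ℕ} (T : Finset (Fin d)) (hT : 1 ≤ T.card) (hC : 0 ≤ Cconst d)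
    (A : Finset (Fin d → ℕ)) (hA : IsLowerSet (A : Set (Fin d → ℕ)))
    (hA1 : ∀ x : Fin d → ℕ, (∀ i, x i ≤ 1) → x ∈ A) :
    Cconst d * ((A.filter fun x => Finset.univ.filter (fun i => 2 ≤ x i) = T).card : ℝ)
      ≤ (((A + A).filter fun x => Finset.univ.filter (fun i => 3 ≤ x i) = T).card : ℝ) := by
  have h := total_ge T.card hT Tᶜ (fun W => ((cell T A 2 ∅ W).card : ℝ))
    (fun Z W => ((cell T (A + A) 3 Z W).card : ℝ)) (fun _ _ => Nat.cast_nonneg _)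
    (fun P Q hPQ _ => by exact_mod_cast Finset.card_le_card (cell_anti T A hA 2 hPQ))
    (fun P Q _ _ => cell_key T hT A hA hA1 P Q)
  have hd : T.card + Tᶜ.card = d := by rw [Finset.card_add_card_compl, Fintype.card_fin]
  rw [hd] at h
  have h1 : ((A.filter fun x => Finset.univ.filter (fun i => 2 ≤ x i) = T).card : ℝ)
      ≤ ∑ W ∈ Tᶜ.powerset, ((cell T A 2 ∅ W).card : ℝ) := by
    exact_mod_cast card_le_sum_cell T A
  have h2 : (∑ W ∈ Tᶜ.powerset, ∑ Z ∈ W.powerset, ((cell T (A + A) 3 Z W).card : ℝ))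
      ≤ (((A + A).filter fun x => Finset.univ.filter (fun i => 3 ≤ x i) = T).card : ℝ) := by
    exact_mod_cast sum_cell_le_card T (A + A)
  exact (mul_le_mul_of_nonneg_left h1 hC).trans (h.trans h2)

theorem Cconst_nonneg (d : ℕ) : 0 ≤ Cconst d := by
  unfold Cconst
  split_ifs
  · positivity
  · have : (1 : ℝ) ≤ 2 ^ (d / 2 + 1) := one_le_pow₀ (by norm_num)
    linarith
  · have : (1 : ℝ) ≤ 2 ^ ((d - 1) / 2) := one_le_pow₀ (by norm_num)
    linarith

/-- The theorem for lower sets in `ℕ ^ d` that contain the unit cube.  The block of `T = ∅` has at most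
`2 ^ d` points in `A` and all `3 ^ d` points in `A + A`. -/
theorem lower_set_ge {d : ℕ} (A : Finset (Fin d → ℕ)) (hA : IsLowerSet (A : Set (Fin d → ℕ)))
    (hA1 : ∀ x : Fin d → ℕ, (∀ i, x i ≤ 1) → x ∈ A) :
    Cconst d * ((A.card : ℝ) - 2 ^ d) + 3 ^ d ≤ ((A + A).card : ℝ) := by
  have hsplit : ∀ (B : Finset (Fin d → ℕ)) (f : (Fin d → ℕ) → Finset (Fin d)),
      (B.card : ℝ) = ((B.filter fun x => f x = ∅).card : ℝ)
        + ∑ T ∈ Finset.univ.erase ∅, ((B.filter fun x => f x = T).card : ℝ) := by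
    intro B f
    rw [Finset.add_sum_erase _ (fun T => ((B.filter fun x => f x = T).card : ℝ)) (Finset.mem_univ _)]
    exact_mod_cast Finset.card_eq_sum_card_fiberwise (f := f) (t := Finset.univ) (by simp)
  have h0 : ((A.filter fun x => Finset.univ.filter (fun i => 2 ≤ x i) = ∅).card : ℝ) ≤ 2 ^ d := by
    have : (A.filter fun x => Finset.univ.filter (fun i => 2 ≤ x i) = ∅).card
        ≤ (Fintype.piFinset fun _ : Fin d => Finset.range 2).card := by
      refine Finset.card_le_card fun x hx => ?_
      have := (Finset.mem_filter.1 hx).2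
      rw [Finset.filter_eq_empty_iff] at this
      exact Fintype.mem_piFinset.2 fun i => Finset.mem_range.2 (by have := this (Finset.mem_univ i); omega)
    rw [Fintype.card_piFinset_const, Finset.card_range] at this
    exact_mod_cast this
  have h3 : (3 : ℝ) ^ d ≤ (((A + A).filter fun x => Finset.univ.filter (fun i => 3 ≤ x i) = ∅).card : ℝ) := by
    have : (Fintype.piFinset fun _ : Fin d => Finset.range 3).card
        ≤ ((A + A).filter fun x => Finset.univ.filter (fun i => 3 ≤ x i) = ∅).card := by
      refine Finset.card_le_card fun y hy => ?_
      rw [Fintype.mem_piFinset] at hy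
      simp only [Finset.mem_range] at hy
      refine Finset.mem_filter.2 ⟨Finset.mem_add.2
        ⟨fun i => min (y i) 1, hA1 _ (by simp), fun i => y i - 1, hA1 _ ?_, ?_⟩, ?_⟩
      · intro i; have := hy i; omega
      · funext i; simp only [Pi.add_apply]; omega
      · rw [Finset.filter_eq_empty_iff]
        intro i _; have := hy i; omega
    rw [Fintype.card_piFinset_const, Finset.card_range] at this
    exact_mod_cast this
  have hC := Cconst_nonneg d
  have hblocks := Finset.sum_le_sum (s := Finset.univ.erase (∅ : Finset (Fin d))) fun T hT =>
    block_ge T (Finset.card_pos.2 (Finset.nonempty_iff_ne_empty.2 (Finset.ne_of_mem_erase hT))) hC A hA hA1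
  rw [← Finset.mul_sum] at hblocks
  have e1 := hsplit A fun x => Finset.univ.filter (fun i => 2 ≤ x i)
  have e2 := hsplit (A + A) fun x => Finset.univ.filter (fun i => 3 ≤ x i)
  rw [e2, e1]
  have := mul_le_mul_of_nonneg_left h0 hC
  linarith

/-! ### Conclusion -/

/-- If a finite set `A ⊂ ℝ^m` contains the vertices of a non-degenerate
`d`-dimensional parallelepiped, then `|A+A| ≥ C_d (|A| - 2^d) + 3^d`. -/
theorem stmt0 (d m : ℕ) (hd : 1 ≤ d) (A : Finset (Fin m → ℝ))
    (v0 : Fin m → ℝ) (v : Fin d → (Fin m → ℝ))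
    (hli : LinearIndependent ℝ v)
    (hsub : ∀ ε : Fin d → ℝ, (∀ i, ε i = 0 ∨ ε i = 1) →
      v0 + ∑ i, ε i • v i ∈ A) :
    ((A + A).card : ℝ) ≥ Cconst d * ((A.card : ℝ) - 2 ^ d) + 3 ^ d := by
  obtain ⟨φ, hφ⟩ := LinearMap.exists_leftInverse_of_injective (Fintype.linearCombination ℝ v)
    (LinearMap.ker_eq_bot.2 (linearIndependent_iff_injective_fintypeLinearCombination.1 hli))
  have hφ' : ∀ ε : Fin d → ℝ, φ (∑ i, ε i • v i) = ε := fun ε => by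
    have := LinearMap.congr_fun hφ ε
    simpa [Fintype.linearCombination_apply] using this
  set A₀ : Finset (Fin m → ℝ) := {-v0} + A
  have hA₀ : A₀.card = A.card := Finset.card_singleton_add _ _
  have hA₀' : (A₀ + A₀).card = (A + A).card := by
    rw [show A₀ + A₀ = {-v0 + -v0} + (A + A) by
      rw [← Finset.singleton_add_singleton, add_add_add_comm], Finset.card_singleton_add]
  -- the first compression is along `φ` itself, so it also removes the kernel of `φ`;
  -- `1 ≤ d` provides a coordinate
  have hcube := cube_compress φ ⟨0, hd⟩ A₀ fun ε hε =>
    ⟨∑ i, ε i • v i, by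
      have := Finset.add_mem_add (Finset.mem_singleton_self (-v0)) (hsub ε hε)
      rwa [neg_add_cancel_left] at this, hφ' ε⟩
  have hsum := card_compress_add_le φ.toAddMonoidHom ⟨0, hd⟩ A₀
  obtain ⟨B, hB1, hB2, hB3, hB4⟩ := exists_natDown Finset.univ _ hcube
  obtain ⟨L, hL, hL1, hL2, hL3⟩ := exists_lower_set B hB3 fun i => hB4 i (Finset.mem_univ i)
  have hcard : L.card = A.card := by rw [hL2, hB1, card_compress, hA₀]
  have hle : (L + L).card ≤ (A + A).card := (hL3.trans (hB2.trans hsum)).trans hA₀'.le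
  have := lower_set_ge L hL hL1
  rw [hcard] at this
  exact this.trans (by exact_mod_cast hle)
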